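/- Let a < b and let f, g : [a;b] → ℝ be regulated functions with no common points of discontinuity. Let (η_k)_{k≥0} and (θ_k)_{k≥0} be nonincreasing sequences of non-negative reals with η_k → 0 and θ_k → 0 as k → ∞. Set η_{-1} := sup_{a≤t≤b} |f(t) − f(a)| and S := Σ_{k=0}^{∞} 2^k · η_{k−1} · TV^{θ_k}(g,[a;b]) + Σ_{k=0}^{∞} 2^k · θ_k · TV^{η_k}(f,[a;b]). If S < +∞, then the Riemann–Stieltjes integral ∫_a^b f dg exists and |∫_a^b f dg − f(a)·(g(b) − g(a))| ≤ S. -/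

import Mathlib

open Filter Set

/-- Truncated variation of `f` on `[a;b]` with truncation parameter `δ`. -/
noncomputable def truncVar (f : ℝ → ℝ) (δ a b : ℝ) : ENNReal :=
  ⨆ (n : ℕ) (t : Fin (n + 1) → ℝ) (_ : StrictMono t)
    (_ : ∀ i, t i ∈ Set.Icc a b),
    ∑ i : Fin n, ENNReal.ofReal (|f (t i.succ) - f (t i.castSucc)| - δ)

/-- p-variation of `f` on `[a;b]`. -/
noncomputable def pVar (f : ℝ → ℝ) (p a b : ℝ) : ENNReal :=
  ⨆ (n : ℕ) (t : Fin (n + 1) → ℝ) (_ : StrictMono t)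
    (_ : ∀ i, t i ∈ Set.Icc a b),
    ∑ i : Fin n, ENNReal.ofReal (|f (t i.succ) - f (t i.castSucc)| ^ p)

/-- The p-variation norm `(V^p(f,[a;b]))^{1/p}`. -/
noncomputable def pVarNorm (f : ℝ → ℝ) (p a b : ℝ) : ℝ :=
  (pVar f p a b).toReal ^ (1 / p)

/-- Oscillation norm `sup_{a ≤ s < t ≤ b} |f t - f s|`. -/
noncomputable def oscNorm (f : ℝ → ℝ) (a b : ℝ) : ℝ :=
  sSup {x | ∃ s ∈ Set.Icc a b, ∃ t ∈ Set.Icc a b, s < t ∧ x = |f t - f s|}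

/-- Sup norm `sup_{a ≤ t ≤ b} |f t|`. -/
noncomputable def supNorm (f : ℝ → ℝ) (a b : ℝ) : ℝ :=
  sSup {x | ∃ t ∈ Set.Icc a b, x = |f t|}

/-- `I` is the Riemann–Stieltjes integral `∫_a^b f dg`. -/
def RSIntegral (f g : ℝ → ℝ) (a b : ℝ) (I : ℝ) : Prop :=
  ∀ ε > (0 : ℝ), ∃ δ > (0 : ℝ), ∀ (n : ℕ) (t : Fin (n + 1) → ℝ) (ξ : Fin n → ℝ),
    StrictMono t → t 0 = a → t (Fin.last n) = b →
    (∀ i : Fin n, t i.castSucc ≤ ξ i ∧ ξ i ≤ t i.succ) →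
    (∀ i : Fin n, t i.succ - t i.castSucc < δ) →
    |∑ i : Fin n, f (ξ i) * (g (t i.succ) - g (t i.castSucc)) - I| < ε

/-- `f` is regulated on `[a;b]`: all the relevant one-sided limits exist and are finite. -/
def Regulated (f : ℝ → ℝ) (a b : ℝ) : Prop :=
  (∃ L : ℝ, Tendsto f (nhdsWithin a (Set.Ioi a)) (nhds L)) ∧
  (∃ L : ℝ, Tendsto f (nhdsWithin b (Set.Iio b)) (nhds L)) ∧
  ∀ x ∈ Set.Ioo a b,
    (∃ L : ℝ, Tendsto f (nhdsWithin x (Set.Iio x)) (nhds L)) ∧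
    (∃ L : ℝ, Tendsto f (nhdsWithin x (Set.Ioi x)) (nhds L))

/-- `f` and `g` have no common points of discontinuity on `[a;b]`. -/
def NoCommonDiscont (f g : ℝ → ℝ) (a b : ℝ) : Prop :=
  ∀ x ∈ Set.Icc a b,
    ContinuousWithinAt f (Set.Icc a b) x ∨ ContinuousWithinAt g (Set.Icc a b) x
/-!
Along a finite grid, `f` and `g` are replaced by paths of the play operator, which stay within a
prescribed error `η`, respectively `θ`, and whose variation is at most the truncated variation
`TV^η`, respectively `TV^θ`. The difference of two Riemann–Stieltjes sums is bilinear in `(f, g)`,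
so the part with the path of `g` is at most `osc f · TV^θ(g)` and, by summation by parts, the part
with the path of `f` and the error of `g` is at most `θ · TV^η(f)`. What remains is the same
expression in the two errors. Their truncated variations are at most twice the original ones, so
iterating with `η_k` and `θ_k` gives the series `S` with its powers of two.

Comparing a Riemann–Stieltjes sum with `f(a) (g(b) - g(a))` gives the bound by `S`. For the Cauchy
criterion one starts the iteration late, where the tail of `S` is small. The first term is then
small for fine partitions: `f` oscillates little except near finitely many discontinuities, and
there the path of `g` hardly moves, as `g` is continuous at these points.
-/

/-- The truncated variation of `f` on a set `s` of a preorder: the supremum of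
`∑ i < n, max (|f (u (i + 1)) - f (u i)| - δ) 0` over all finite monotone chains `u` in `s`.
It extends `truncVar` to arbitrary index sets, in particular to finite sequences, in the form used
by Mathlib for `eVariationOn`. -/
noncomputable def truncVariationOn {α : Type*} [Preorder α] (f : α → ℝ) (δ : ℝ) (s : Set α) :
    ENNReal :=
  ⨆ p : ℕ × {u : ℕ → α // Monotone u ∧ ∀ i, u i ∈ s},
    ∑ i ∈ Finset.range p.1, ENNReal.ofReal (|f (p.2.1 (i + 1)) - f (p.2.1 i)| - δ)

namespace truncVariationOn

variable {α β : Type*} [Preorder α] [Preorder β] {f : α → ℝ} {δ δ' : ℝ} {s t : Set α}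

theorem sum_le {u : ℕ → α} (n : ℕ) (hu : Monotone u) (hus : ∀ i, u i ∈ s) :
    ∑ i ∈ Finset.range n, ENNReal.ofReal (|f (u (i + 1)) - f (u i)| - δ) ≤
      truncVariationOn f δ s :=
  le_iSup_of_le (⟨n, u, hu, hus⟩ : ℕ × {u : ℕ → α // Monotone u ∧ ∀ i, u i ∈ s}) le_rfl

theorem le_of_forall_sum_le {C : ENNReal}
    (h : ∀ (n : ℕ) (u : ℕ → α), Monotone u → (∀ i, u i ∈ s) →
      ∑ i ∈ Finset.range n, ENNReal.ofReal (|f (u (i + 1)) - f (u i)| - δ) ≤ C) :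
    truncVariationOn f δ s ≤ C :=
  iSup_le fun ⟨n, u, hu, hus⟩ ↦ h n u hu hus

theorem mono (hst : s ⊆ t) : truncVariationOn f δ s ≤ truncVariationOn f δ t :=
  le_of_forall_sum_le fun n _ hu hus ↦ sum_le n hu fun i ↦ hst (hus i)

theorem anti (f : α → ℝ) (s : Set α) : Antitone fun δ ↦ truncVariationOn f δ s :=
  fun _ _ hδ ↦ iSup_mono fun _ ↦ Finset.sum_le_sum fun _ _ ↦
    ENNReal.ofReal_le_ofReal (sub_le_sub_left hδ _)

theorem comp_le {φ : β → α} {r : Set β} (hφ : Monotone φ) (hrs : MapsTo φ r s) :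
    truncVariationOn (f ∘ φ) δ r ≤ truncVariationOn f δ s :=
  le_of_forall_sum_le fun n _ hu hur ↦ sum_le n (hφ.comp hu) fun i ↦ hrs (hur i)

theorem add_jump_le {b c : α}
    (hb : IsGreatest s b) (hbc : b ≤ c) (hst : s ⊆ t) (hc : c ∈ t) :
    truncVariationOn f δ s + ENNReal.ofReal (|f c - f b| - δ) ≤ truncVariationOn f δ t := by
  have : Nonempty {u : ℕ → α // Monotone u ∧ ∀ i, u i ∈ s} :=
    ⟨fun _ ↦ b, monotone_const, fun _ ↦ hb.1⟩
  rw [truncVariationOn, ENNReal.iSup_add]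
  refine iSup_le fun ⟨n, u, hu, hus⟩ ↦ ?_
  let v : ℕ → α := fun i ↦ if i ≤ n then u i else if i = n + 1 then b else c
  have hv : Monotone v := monotone_nat_of_le_succ fun i ↦ by
    have hi := hu i.le_succ
    have hub := hb.2 (hus i)
    grind
  have hvt : ∀ i, v i ∈ t := fun i ↦ by
    have hi := hst (hus i)
    have hbt := hst hb.1
    grind
  have hsum : ∑ i ∈ Finset.range n, ENNReal.ofReal (|f (v (i + 1)) - f (v i)| - δ) =
      ∑ i ∈ Finset.range n, ENNReal.ofReal (|f (u (i + 1)) - f (u i)| - δ) :=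
    Finset.sum_congr rfl fun i hi ↦ by
      have := Finset.mem_range.1 hi
      simp only [v, if_pos this.le, if_pos (Nat.succ_le_of_lt this)]
  refine le_trans ?_ (sum_le (n + 2) hv hvt)
  rw [Finset.sum_range_succ, Finset.sum_range_succ, hsum]
  have hvb : v (n + 1) = b := by simp [v]
  have hvc : v (n + 1 + 1) = c := by simp [v]
  rw [hvb, hvc]
  exact add_le_add_left (le_self_add) _

end truncVariationOn

theorem truncVar_anti (f : ℝ → ℝ) (a b : ℝ) : Antitone fun δ ↦ truncVar f δ a b := by
  intro δ δ' h
  dsimp only [truncVar]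
  gcongr

theorem strictMono_snoc {α : Type*} [Preorder α] {k : ℕ} {t : Fin (k + 1) → α} {x : α}
    (ht : StrictMono t) (hx : t (Fin.last k) < x) :
    StrictMono (Fin.snoc (α := fun _ ↦ α) t x) :=
  Fin.strictMono_iff_lt_succ.2 <| Fin.lastCases (by simpa using hx) fun i ↦ by
    rw [Fin.succ_castSucc, Fin.snoc_castSucc, Fin.snoc_castSucc]
    exact ht i.castSucc_lt_succ

theorem sum_le_truncVar {f : ℝ → ℝ} {u : ℕ → ℝ} {δ a b : ℝ} (hδ : 0 ≤ δ) (n : ℕ)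
    (hu : Monotone u) (hus : ∀ i, u i ∈ Icc a b) :
    ∑ i ∈ Finset.range n, ENNReal.ofReal (|f (u (i + 1)) - f (u i)| - δ) ≤ truncVar f δ a b := by
  -- A repeated point contributes nothing, so repetitions can be deleted from the chain.
  suffices ∃ (k : ℕ) (t : Fin (k + 1) → ℝ), StrictMono t ∧ (∀ i, t i ∈ Icc a b) ∧
      t (Fin.last k) = u n ∧
      ∑ i ∈ Finset.range n, ENNReal.ofReal (|f (u (i + 1)) - f (u i)| - δ) =
        ∑ i : Fin k, ENNReal.ofReal (|f (t i.succ) - f (t i.castSucc)| - δ) by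
    obtain ⟨k, t, ht, htmem, -, hsum⟩ := this
    exact hsum.trans_le (le_iSup₂_of_le k t (le_iSup₂_of_le ht htmem le_rfl))
  induction n with
  | zero => exact ⟨0, fun _ ↦ u 0, Fin.strictMono_iff_lt_succ.2 fun i ↦ i.elim0,
      fun _ ↦ hus 0, rfl, by simp⟩
  | succ n ih =>
    obtain ⟨k, t, ht, htmem, hlast, hsum⟩ := ih
    rw [Finset.sum_range_succ, hsum]
    rcases (hu n.le_succ).eq_or_lt with heq | hlt
    · exact ⟨k, t, ht, htmem, hlast.trans heq, by simp [← heq, hδ]⟩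
    · refine ⟨k + 1, Fin.snoc t (u (n + 1)), strictMono_snoc ht (hlast ▸ hlt), ?_,
        Fin.snoc_last .., ?_⟩
      · intro i
        cases i using Fin.lastCases with
        | last => simpa using hus (n + 1)
        | cast i => simpa using htmem i
      · simp only [Fin.sum_univ_castSucc, Fin.succ_castSucc, Fin.snoc_castSucc, Fin.succ_last,
          Fin.snoc_last, hlast]

theorem truncVariationOn_Icc_le_truncVar (f : ℝ → ℝ) {δ : ℝ} (hδ : 0 ≤ δ) (a b : ℝ) :
    truncVariationOn f δ (Icc a b) ≤ truncVar f δ a b :=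
  truncVariationOn.le_of_forall_sum_le fun n _ hu hus ↦ sum_le_truncVar hδ n hu hus

/-- The variation of the finite sequence `y 0, …, y m`, as a real number. -/
def seqVar (y : ℕ → ℝ) (m : ℕ) : ℝ := ∑ i ∈ Finset.range m, |y (i + 1) - y i|

theorem seqVar_zero (y : ℕ → ℝ) : seqVar y 0 = 0 := Finset.sum_range_zero _

theorem seqVar_nonneg (y : ℕ → ℝ) (m : ℕ) : 0 ≤ seqVar y m :=
  Finset.sum_nonneg fun _ _ ↦ abs_nonneg _

theorem seqVar_succ (y : ℕ → ℝ) (m : ℕ) : seqVar y (m + 1) = seqVar y m + |y (m + 1) - y m| :=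
  Finset.sum_range_succ _ _

theorem sum_Ico_abs_eq_seqVar_sub (y : ℕ → ℝ) {p q : ℕ} (hpq : p ≤ q) :
    ∑ i ∈ Finset.Ico p q, |y (i + 1) - y i| = seqVar y q - seqVar y p :=
  Finset.sum_Ico_eq_sub _ hpq

theorem abs_sub_le_seqVar_sub (y : ℕ → ℝ) {p q : ℕ} (hpq : p ≤ q) :
    |y q - y p| ≤ seqVar y q - seqVar y p := by
  rw [← sum_Ico_abs_eq_seqVar_sub y hpq, ← Finset.sum_Ico_sub y hpq]
  exact Finset.abs_sum_le_sum_abs _ _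

theorem seqVar_mono (y : ℕ → ℝ) : Monotone (seqVar y) := fun _ _ h ↦
  sub_nonneg.1 ((abs_nonneg _).trans (abs_sub_le_seqVar_sub y h))

theorem truncVariationOn_sub_le (x y : ℕ → ℝ) (δ : ℝ) (m : ℕ) :
    truncVariationOn (x - y) δ (Iic m) ≤
      truncVariationOn x δ (Iic m) + ENNReal.ofReal (seqVar y m) := by
  refine truncVariationOn.le_of_forall_sum_le fun n u hu hum ↦ ?_
  have hy : ∑ i ∈ Finset.range n, |y (u (i + 1)) - y (u i)| ≤ seqVar y m := by
    calc ∑ i ∈ Finset.range n, |y (u (i + 1)) - y (u i)|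
        ≤ ∑ i ∈ Finset.range n, (seqVar y (u (i + 1)) - seqVar y (u i)) :=
          Finset.sum_le_sum fun i _ ↦ abs_sub_le_seqVar_sub y (hu i.le_succ)
      _ = seqVar y (u n) - seqVar y (u 0) := Finset.sum_range_sub (fun i ↦ seqVar y (u i)) n
      _ ≤ seqVar y m := (sub_le_self _ (seqVar_nonneg y _)).trans (seqVar_mono y (hum n))
  calc ∑ i ∈ Finset.range n, ENNReal.ofReal (|(x - y) (u (i + 1)) - (x - y) (u i)| - δ)
      ≤ ∑ i ∈ Finset.range n, (ENNReal.ofReal (|x (u (i + 1)) - x (u i)| - δ) +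
          ENNReal.ofReal |y (u (i + 1)) - y (u i)|) := by
        refine Finset.sum_le_sum fun i _ ↦ ?_
        refine le_trans (ENNReal.ofReal_le_ofReal ?_) ENNReal.ofReal_add_le
        have := abs_sub (x (u (i + 1)) - x (u i)) (y (u (i + 1)) - y (u i))
        rw [Pi.sub_apply, Pi.sub_apply, sub_sub_sub_comm]
        linarith
    _ ≤ _ := by
        rw [Finset.sum_add_distrib, ← ENNReal.ofReal_sum_of_nonneg fun _ _ ↦ abs_nonneg _]
        exact add_le_add (truncVariationOn.sum_le n hu hum) (ENNReal.ofReal_le_ofReal hy)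

/-- The play operator of hysteresis theory, driven by the sequence `x`: starting from `y₀`, it moves
at each step only as far as needed to stay within distance `r` of `x`. -/
noncomputable def play (x : ℕ → ℝ) (r y₀ : ℝ) : ℕ → ℝ
  | 0 => y₀
  | i + 1 => max (x (i + 1) - r) (min (x (i + 1) + r) (play x r y₀ i))

section Play

variable {x : ℕ → ℝ} {r y₀ : ℝ}

theorem play_succ (x : ℕ → ℝ) (r y₀ : ℝ) (i : ℕ) :
    play x r y₀ (i + 1) = max (x (i + 1) - r) (min (x (i + 1) + r) (play x r y₀ i)) := rfl

theorem abs_sub_play_le (hr : 0 ≤ r) (h₀ : |x 0 - y₀| ≤ r) : ∀ i, |x i - play x r y₀ i| ≤ r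
  | 0 => h₀
  | i + 1 => by rw [play_succ, abs_le]; grind

theorem seqVar_play_sub_le_abs_sub {p q : ℕ} {z : ℝ} (hpq : p ≤ q)
    (hz : ∀ i ∈ Ioc p q, |x i - z| ≤ r) :
    seqVar (play x r y₀) q - seqVar (play x r y₀) p ≤ |play x r y₀ p - z| := by
  -- Every step moves the play towards `z`, so the path travelled is the loss of distance to `z`.
  suffices seqVar (play x r y₀) q - seqVar (play x r y₀) p + |play x r y₀ q - z| ≤
      |play x r y₀ p - z| from (le_add_of_nonneg_right (abs_nonneg _)).trans this
  induction q, hpq using Nat.le_induction with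
  | base => simp
  | succ q hpq ih =>
    have hstep : |play x r y₀ (q + 1) - play x r y₀ q| + |play x r y₀ (q + 1) - z| ≤
        |play x r y₀ q - z| := by
      have := hz (q + 1) ⟨Nat.lt_succ_of_le hpq, le_rfl⟩
      rw [play_succ]
      grind
    have := ih fun i hi ↦ hz i ⟨hi.1, hi.2.trans q.le_succ⟩
    rw [seqVar_succ]
    linarith

theorem seqVar_play_eq_zero {m : ℕ} (h : ∀ i ≤ m, |x i - y₀| ≤ r) :
    seqVar (play x r y₀) m = 0 := by
  refine le_antisymm ?_ (seqVar_nonneg _ _)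
  simpa [play, seqVar] using
    seqVar_play_sub_le_abs_sub (y₀ := y₀) (Nat.zero_le m) fun i hi ↦ h i hi.2

theorem seqVar_play_sub_le_of_abs_sub_le (hr : 0 ≤ r) (h₀ : |x 0 - y₀| ≤ r) {ρ c : ℝ} {p q : ℕ}
    (hρ : ρ ≤ r) (hpq : p ≤ q) (hc : ∀ i ∈ Icc p q, |x i - c| ≤ ρ) :
    seqVar (play x r y₀) q - seqVar (play x r y₀) p ≤ 2 * ρ := by
  set y := play x r y₀ p
  have hxp := hc p ⟨le_rfl, hpq⟩
  have hyp : |x p - y| ≤ r := abs_sub_play_le hr h₀ p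
  obtain ⟨z, hzc, hzy⟩ : ∃ z, |c - z| ≤ r - ρ ∧ |y - z| ≤ 2 * ρ := by
    refine ⟨max (c - (r - ρ)) (min (c + (r - ρ)) y), ?_, ?_⟩ <;> grind
  refine (seqVar_play_sub_le_abs_sub hpq fun i hi ↦ ?_).trans hzy
  have := hc i (Ioc_subset_Icc_self hi)
  linarith [abs_sub_le (x i) c z]

theorem play_succ_eq_of_le {ε : ℝ} {i : ℕ} (hr : 0 ≤ r) (hε : ε = 1 ∨ ε = -1)
    (h : r ≤ ε * (x (i + 1) - play x r y₀ i)) : play x r y₀ (i + 1) = x (i + 1) - ε * r := by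
  rw [play_succ]
  rcases hε with rfl | rfl <;> grind

theorem play_succ_eq_self_or_pushed (hr : 0 ≤ r) (i : ℕ) :
    play x r y₀ (i + 1) = play x r y₀ i ∨
      ∃ ε : ℝ, (ε = 1 ∨ ε = -1) ∧ play x r y₀ (i + 1) = x (i + 1) - ε * r ∧
        |play x r y₀ (i + 1) - play x r y₀ i| = ε * (play x r y₀ (i + 1) - play x r y₀ i) := by
  rcases le_or_gt |x (i + 1) - play x r y₀ i| r with hle | hlt
  · left
    rw [play_succ]
    grind
  · right
    obtain ⟨ε, hε, hεr⟩ : ∃ ε : ℝ, (ε = 1 ∨ ε = -1) ∧ r ≤ ε * (x (i + 1) - play x r y₀ i) :=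
      (lt_abs.1 hlt).elim (fun h ↦ ⟨1, .inl rfl, by linarith⟩)
        fun h ↦ ⟨-1, .inr rfl, by linarith⟩
    have hy := play_succ_eq_of_le hr hε hεr
    refine ⟨ε, hε, hy, ?_⟩
    rcases hε with rfl | rfl <;> grind

/-- The invariant of the play operator: at time `m` the play was last pushed by `x` at time `l`, in
direction `ε = ±1`. Here `k` is the turning point of `x` before which the current push started, and
`v` is the variation of the play up to that point. -/
def PlayPushed (x : ℕ → ℝ) (r y₀ ε : ℝ) (l m : ℕ) : Prop :=
  l ≤ m ∧ (ε = 1 ∨ ε = -1) ∧ play x r y₀ m = x l - ε * r ∧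
    ∃ k ≤ l, ∃ v : ℝ, ENNReal.ofReal v ≤ truncVariationOn x (2 * r) (Iic k) ∧
      seqVar (play x r y₀) m ≤ v + ε * (play x r y₀ m - x k) - r

theorem PlayPushed.seqVar_le {ε : ℝ} {l m : ℕ} (h : PlayPushed x r y₀ ε l m) :
    ENNReal.ofReal (seqVar (play x r y₀) m) ≤ truncVariationOn x (2 * r) (Iic l) := by
  obtain ⟨-, hε, hy, k, hkl, v, hv, hvar⟩ := h
  have hjump : ε * (play x r y₀ m - x k) - r ≤ |x l - x k| - 2 * r := by
    rw [hy]
    rcases hε with rfl | rfl <;> grind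
  calc ENNReal.ofReal (seqVar (play x r y₀) m)
      ≤ ENNReal.ofReal (v + (|x l - x k| - 2 * r)) := ENNReal.ofReal_le_ofReal (by linarith)
    _ ≤ ENNReal.ofReal v + ENNReal.ofReal (|x l - x k| - 2 * r) := ENNReal.ofReal_add_le
    _ ≤ truncVariationOn x (2 * r) (Iic k) + ENNReal.ofReal (|x l - x k| - 2 * r) := by gcongr
    _ ≤ truncVariationOn x (2 * r) (Iic l) :=
      truncVariationOn.add_jump_le isGreatest_Iic hkl (Iic_subset_Iic.2 hkl) self_mem_Iic

theorem PlayPushed.succ (hr : 0 ≤ r) {ε : ℝ} {l m : ℕ} (h : PlayPushed x r y₀ ε l m) :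
    ∃ ε' l', PlayPushed x r y₀ ε' l' (m + 1) := by
  have hvar_l := h.seqVar_le
  obtain ⟨hlm, hε, hy, k, hkl, v, hv, hvar⟩ := h
  rcases play_succ_eq_self_or_pushed hr m with hstay | ⟨ε', hε', hy', habs⟩
  · refine ⟨ε, l, hlm.trans m.le_succ, hε, hstay.trans hy, k, hkl, v, hv, ?_⟩
    rwa [seqVar_succ, hstay, sub_self, abs_zero, add_zero]
  · rcases eq_or_ne ε' ε with rfl | hturn
    · refine ⟨ε', m + 1, le_rfl, hε, hy', k, by omega, v, hv, ?_⟩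
      rw [seqVar_succ, habs]
      linarith
    · refine ⟨ε', m + 1, le_rfl, hε', hy', l, by omega, seqVar (play x r y₀) m, hvar_l, ?_⟩
      rw [seqVar_succ, habs, hy]
      rcases hε with rfl | rfl <;> rcases hε' with rfl | rfl <;> grind

theorem PlayPushed.exists_of_le (hr : 0 ≤ r) {ε : ℝ} {l n m : ℕ} (h : PlayPushed x r y₀ ε l n)
    (hnm : n ≤ m) : ∃ ε' l', PlayPushed x r y₀ ε' l' m := by
  induction m, hnm using Nat.le_induction with
  | base => exact ⟨ε, l, h⟩
  | succ m _ ih =>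
    obtain ⟨ε', l', h'⟩ := ih
    exact h'.succ hr

theorem exists_center_of_abs_sub_le {n : ℕ} (hosc : ∀ i ≤ n, ∀ j ≤ n, |x i - x j| ≤ 2 * r) {ε : ℝ}
    (hε : ε = 1 ∨ ε = -1) :
    ∃ k ≤ n, ∀ i ≤ n, ε * x k ≤ ε * x i ∧ |x i - (x k + ε * r)| ≤ r := by
  obtain ⟨k, hk, hmin⟩ :=
    Finset.exists_min_image (Finset.Iic n) (fun i ↦ ε * x i) Finset.nonempty_Iic
  simp only [Finset.mem_Iic] at hk hmin
  refine ⟨k, hk, fun i hi ↦ ⟨hmin i hi, ?_⟩⟩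
  have := hosc i hi k hk
  have := hmin i hi
  rcases hε with rfl | rfl <;> grind

/-- As long as the oscillation of `x` does not exceed `2 * r` the play can rest. The starting point
is chosen so that the first push, at time `n + 1`, costs exactly a jump of `x` minus `2 * r`. -/
theorem exists_playPushed (hr : 0 ≤ r) {n : ℕ}
    (hosc : ∀ i ≤ n, ∀ j ≤ n, |x i - x j| ≤ 2 * r)
    {j : ℕ} (hj : j ≤ n) (hjump : 2 * r < |x (n + 1) - x j|) :
    ∃ y₀ ε, |x 0 - y₀| ≤ r ∧ PlayPushed x r y₀ ε (n + 1) (n + 1) := by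
  obtain ⟨ε, hε, hεj⟩ : ∃ ε : ℝ, (ε = 1 ∨ ε = -1) ∧ 2 * r ≤ ε * (x (n + 1) - x j) :=
    (lt_abs.1 hjump).elim (fun h ↦ ⟨1, .inl rfl, by linarith⟩)
      fun h ↦ ⟨-1, .inr rfl, by linarith⟩
  obtain ⟨k, hk, hcenter⟩ := exists_center_of_abs_sub_le hosc hε
  set y₀ := x k + ε * r with hy₀
  have hεε : ε * ε = 1 := by rcases hε with rfl | rfl <;> norm_num
  have hrest : seqVar (play x r y₀) n = 0 := seqVar_play_eq_zero fun i hi ↦ (hcenter i hi).2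
  have hyn : play x r y₀ n = y₀ := by
    simpa [hrest, seqVar_zero, play, sub_eq_zero] using
      abs_sub_le_seqVar_sub (play x r y₀) (Nat.zero_le n)
  have hpush : play x r y₀ (n + 1) = x (n + 1) - ε * r :=
    play_succ_eq_of_le hr hε (by rw [hyn]; linear_combination hεj + (hcenter j hj).1 + r * hεε)
  refine ⟨y₀, ε, (hcenter 0 n.zero_le).2, le_rfl, hε, hpush, k, by omega, 0, by simp, ?_⟩
  rw [seqVar_succ, hrest, hyn, hpush]
  have hkj := (hcenter j hj).1
  rcases hε with rfl | rfl <;> grind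

theorem exists_seqVar_play_le (x : ℕ → ℝ) (hr : 0 ≤ r) (m : ℕ) :
    ∃ y₀, |x 0 - y₀| ≤ r ∧
      ENNReal.ofReal (seqVar (play x r y₀) m) ≤ truncVariationOn x (2 * r) (Iic m) := by
  by_cases hosc : ∀ i ≤ m, ∀ j ≤ i, |x i - x j| ≤ 2 * r
  · obtain ⟨k, -, hk⟩ := exists_center_of_abs_sub_le (n := m) (fun i hi j hj ↦
      (le_total j i).elim (hosc i hi j) fun h ↦ abs_sub_comm (x i) (x j) ▸ hosc j hj i h)
      (.inl rfl)
    refine ⟨_, (hk 0 m.zero_le).2, ?_⟩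
    simp only [seqVar_play_eq_zero fun i hi ↦ (hk i hi).2, ENNReal.ofReal_zero, zero_le]
  · let P : ℕ → Prop := fun i ↦ ∃ j ≤ i, 2 * r < |x i - x j|
    obtain ⟨N, hNm, ⟨j, hjN, hjump⟩, hfirst⟩ : ∃ N ≤ m, P N ∧ ∀ i < N, ¬P i := by
      classical
      push Not at hosc
      obtain ⟨i, him, hi⟩ := hosc
      exact ⟨Nat.find ⟨i, hi⟩, (Nat.find_min' _ hi).trans him, Nat.find_spec _,
        fun _ ↦ Nat.find_min _⟩
    have hj : j ≠ N := by rintro rfl; rw [sub_self, abs_zero] at hjump; linarith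
    obtain ⟨n, rfl⟩ : ∃ n, N = n + 1 := Nat.exists_eq_succ_of_ne_zero (by omega)
    have hrest : ∀ i ≤ n, ∀ j ≤ n, |x i - x j| ≤ 2 * r := fun i hi j hj ↦ by
      have := hfirst i (by omega)
      have := hfirst j (by omega)
      grind
    obtain ⟨y₀, ε, h₀, hstart⟩ := exists_playPushed hr hrest (j := j) (by omega) hjump
    refine ⟨y₀, h₀, ?_⟩
    obtain ⟨ε, l, hpush⟩ := hstart.exists_of_le hr hNm
    exact hpush.seqVar_le.trans (truncVariationOn.mono (Iic_subset_Iic.2 hpush.1))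

end Play

/-- `y` approximates the finite sequence `x 0, …, x m` at scale `θ`: the error `x - y` has
oscillation at most `θ`, the variation of `y` is at most the truncated variation of `x`, and
wherever `x` stays in a ball of radius `ρ ≤ θ / 2`, `y` has variation at most `2 * ρ`. -/
structure IsTruncApprox (x y : ℕ → ℝ) (θ : ℝ) (m : ℕ) : Prop where
  abs_sub_le : ∀ i j, |(x - y) i - (x - y) j| ≤ θ
  seqVar_le : ENNReal.ofReal (seqVar y m) ≤ truncVariationOn x θ (Iic m)
  seqVar_sub_le : ∀ ⦃ρ c : ℝ⦄ ⦃p q : ℕ⦄, 2 * ρ ≤ θ → p ≤ q →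
    (∀ i ∈ Icc p q, |x i - c| ≤ ρ) → seqVar y q - seqVar y p ≤ 2 * ρ

theorem exists_isTruncApprox (x : ℕ → ℝ) {θ : ℝ} (hθ : 0 ≤ θ) (m : ℕ) :
    ∃ y, IsTruncApprox x y θ m := by
  have hr : 0 ≤ θ / 2 := by linarith
  obtain ⟨y₀, h₀, hvar⟩ := exists_seqVar_play_le x hr m
  have hnear := abs_sub_play_le hr h₀
  refine ⟨play x (θ / 2) y₀, fun i j ↦ ?_, by rwa [mul_div_cancel₀ θ two_ne_zero] at hvar,
    fun ρ c p q hρ hpq hc ↦ ?_⟩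
  · have := abs_sub (x i - play x (θ / 2) y₀ i) (x j - play x (θ / 2) y₀ j)
    rw [Pi.sub_apply, Pi.sub_apply]
    linarith [hnear i, hnear j]
  · exact seqVar_play_sub_le_of_abs_sub_le hr h₀ (by linarith) hpq hc

theorem IsTruncApprox.truncVariationOn_sub_le {x y : ℕ → ℝ} {δ θ : ℝ} {m : ℕ}
    (h : IsTruncApprox x y θ m) (hδ : δ ≤ θ) :
    truncVariationOn (x - y) δ (Iic m) ≤ 2 * truncVariationOn x δ (Iic m) := by
  rw [two_mul]
  exact (_root_.truncVariationOn_sub_le x y δ m).trans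
    (add_le_add_right (h.seqVar_le.trans (truncVariationOn.anti x _ hδ)) _)

/-- The difference of the two Riemann–Stieltjes sums of the integrand `F` against the integrator `G`
along the grid `0, …, m` with tags `σ` and `τ`. -/
def tagDiff (σ τ : ℕ → ℕ) (F G : ℕ → ℝ) (m : ℕ) : ℝ :=
  ∑ j ∈ Finset.range m, (F (σ j) - F (τ j)) * (G (j + 1) - G j)

section TagDiff

variable {σ τ : ℕ → ℕ} {F G G₀ : ℕ → ℝ} {m : ℕ}

theorem tagDiff_eq_add_add (σ τ : ℕ → ℕ) (F G F₀ G₀ : ℕ → ℝ) (m : ℕ) :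
    tagDiff σ τ F G m =
      tagDiff σ τ F G₀ m + tagDiff σ τ F₀ (G - G₀) m + tagDiff σ τ (F - F₀) (G - G₀) m := by
  simp only [tagDiff, ← Finset.sum_add_distrib, Pi.sub_apply]
  exact Finset.sum_congr rfl fun j _ ↦ by ring

theorem abs_tagDiff_le_mul_seqVar {e : ℝ} (hF : ∀ j < m, |F (σ j) - F (τ j)| ≤ e) :
    |tagDiff σ τ F G m| ≤ e * seqVar G m := by
  rw [seqVar, Finset.mul_sum]
  refine (Finset.abs_sum_le_sum_abs _ _).trans (Finset.sum_le_sum fun j hj ↦ ?_)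
  rw [abs_mul]
  exact mul_le_mul_of_nonneg_right (hF j (Finset.mem_range.1 hj)) (abs_nonneg _)

theorem exists_sum_ite_eq_sub (G : ℕ → ℝ) {p : ℕ → Prop} [DecidablePred p]
    (hp : ∀ ⦃i j⦄, i ≤ j → p i → p j) (m : ℕ) :
    ∃ A, ∑ j ∈ Finset.range m, (if p j then G (j + 1) - G j else 0) = G m - G A := by
  induction m with
  | zero => exact ⟨0, by simp⟩
  | succ m ih =>
    by_cases hm : p m
    · obtain ⟨A, hA⟩ := ih
      exact ⟨A, by rw [Finset.sum_range_succ, hA, if_pos hm]; ring⟩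
    · refine ⟨m + 1, (Finset.sum_eq_zero fun j hj ↦ if_neg fun h ↦ hm ?_).trans (sub_self _).symm⟩
      exact hp (Nat.lt_succ_iff.1 (Finset.mem_range.1 hj)) h

theorem eq_add_sum_ite_lt (F : ℕ → ℝ) {i : ℕ} (hi : i ≤ m) :
    F i = F 0 + ∑ u ∈ Finset.range m, if u < i then F (u + 1) - F u else 0 := by
  rw [← Finset.sum_filter, show (Finset.range m).filter (· < i) = Finset.range i by grind,
    Finset.sum_range_sub, add_sub_cancel]

theorem abs_tagDiff_le_mul_seqVar_of_monotone {d : ℝ} (hσ : Monotone σ) (hτ : Monotone τ)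
    (hσm : ∀ j, σ j ≤ m) (hτm : ∀ j, τ j ≤ m) (hG : ∀ i j, |G i - G j| ≤ d) :
    |tagDiff σ τ F G m| ≤ d * seqVar F m := by
  -- Summation by parts: collect the increments of `F`, and note that `{j | u < σ j}` is final.
  have hswap : tagDiff σ τ F G m = ∑ u ∈ Finset.range m, (F (u + 1) - F u) *
      (∑ j ∈ Finset.range m, (if u < σ j then G (j + 1) - G j else 0) -
        ∑ j ∈ Finset.range m, (if u < τ j then G (j + 1) - G j else 0)) := by
    simp only [← Finset.sum_sub_distrib, Finset.mul_sum]
    rw [Finset.sum_comm]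
    refine Finset.sum_congr rfl fun j _ ↦ ?_
    rw [eq_add_sum_ite_lt F (hσm j), eq_add_sum_ite_lt F (hτm j), add_sub_add_left_eq_sub,
      ← Finset.sum_sub_distrib, Finset.sum_mul]
    exact Finset.sum_congr rfl fun u _ ↦ by split_ifs <;> ring
  rw [hswap, seqVar, Finset.mul_sum]
  refine (Finset.abs_sum_le_sum_abs _ _).trans (Finset.sum_le_sum fun u _ ↦ ?_)
  obtain ⟨A, hA⟩ := exists_sum_ite_eq_sub G (p := (u < σ ·)) (fun _ _ h hu ↦ hu.trans_le (hσ h)) m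
  obtain ⟨A', hA'⟩ := exists_sum_ite_eq_sub G (p := (u < τ ·)) (fun _ _ h hu ↦ hu.trans_le (hτ h)) m
  rw [hA, hA', sub_sub_sub_cancel_left, abs_mul, mul_comm]
  exact mul_le_mul_of_nonneg_right (hG A' A) (abs_nonneg _)

theorem ofReal_abs_tagDiff_le_mul {e θ : ℝ} (he : 0 ≤ e) (hF : ∀ j < m, |F (σ j) - F (τ j)| ≤ e)
    (hG₀ : IsTruncApprox G G₀ θ m) :
    ENNReal.ofReal |tagDiff σ τ F G₀ m| ≤ ENNReal.ofReal e * truncVariationOn G θ (Iic m) := by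
  refine (ENNReal.ofReal_le_ofReal (abs_tagDiff_le_mul_seqVar hF)).trans ?_
  rw [ENNReal.ofReal_mul he]
  exact mul_le_mul_right hG₀.seqVar_le _

theorem ofReal_abs_tagDiff_le_mul_of_monotone {F₀ : ℕ → ℝ} {d η : ℝ} (hσ : Monotone σ)
    (hτ : Monotone τ) (hσm : ∀ j, σ j ≤ m) (hτm : ∀ j, τ j ≤ m) (hd : 0 ≤ d)
    (hG : ∀ i j, |G i - G j| ≤ d) (hF₀ : IsTruncApprox F F₀ η m) :
    ENNReal.ofReal |tagDiff σ τ F₀ G m| ≤ ENNReal.ofReal d * truncVariationOn F η (Iic m) := by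
  refine (ENNReal.ofReal_le_ofReal
    (abs_tagDiff_le_mul_seqVar_of_monotone hσ hτ hσm hτm hG)).trans ?_
  rw [ENNReal.ofReal_mul hd]
  exact mul_le_mul_right hF₀.seqVar_le _

theorem abs_tagDiff_sub_le {F₀ : ℕ → ℝ} {η θ : ℝ} (hη : 0 ≤ η) (hF₀ : IsTruncApprox F F₀ η m)
    (hG₀ : IsTruncApprox G G₀ θ m) :
    |tagDiff σ τ (F - F₀) (G - G₀) m| ≤ m * (η * θ) := by
  have hvar : seqVar (G - G₀) m ≤ m * θ := by
    simpa only [seqVar, Finset.card_range, nsmul_eq_mul] using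
      Finset.sum_le_card_nsmul (Finset.range m) _ θ fun i _ ↦ hG₀.abs_sub_le (i + 1) i
  have := abs_tagDiff_le_mul_seqVar (m := m) (G := G - G₀) fun j _ ↦ hF₀.abs_sub_le (σ j) (τ j)
  nlinarith [mul_le_mul_of_nonneg_left hvar hη]

theorem ofReal_abs_tagDiff_le_add_add {F₀ : ℕ → ℝ} {η θ : ℝ} (hσ : Monotone σ) (hτ : Monotone τ)
    (hσm : ∀ j, σ j ≤ m) (hτm : ∀ j, τ j ≤ m) (hθ : 0 ≤ θ) (hF₀ : IsTruncApprox F F₀ η m)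
    (hG₀ : IsTruncApprox G G₀ θ m) :
    ENNReal.ofReal |tagDiff σ τ F G m| ≤ ENNReal.ofReal |tagDiff σ τ F G₀ m| +
      ENNReal.ofReal θ * truncVariationOn F η (Iic m) +
      ENNReal.ofReal |tagDiff σ τ (F - F₀) (G - G₀) m| := by
  rw [tagDiff_eq_add_add σ τ F G F₀ G₀]
  refine (ENNReal.ofReal_le_ofReal (abs_add_three _ _ _)).trans
    (ENNReal.ofReal_add_le.trans (add_le_add_left (ENNReal.ofReal_add_le.trans ?_) _))
  gcongr
  exact ofReal_abs_tagDiff_le_mul_of_monotone hσ hτ hσm hτm hθ hG₀.abs_sub_le hF₀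

theorem IsTruncApprox.ofReal_mul_truncVariationOn_sub_le {x y : ℕ → ℝ} {δ θ : ℝ}
    (h : IsTruncApprox x y θ m) (hδ : δ ≤ θ) (c : ℝ) :
    ENNReal.ofReal c * truncVariationOn (x - y) δ (Iic m) ≤
      ENNReal.ofReal (2 * c) * truncVariationOn x δ (Iic m) := by
  rw [ENNReal.ofReal_mul two_pos.le, ENNReal.ofReal_ofNat, mul_comm 2, mul_assoc]
  exact mul_le_mul_right (h.truncVariationOn_sub_le hδ) _

/-- Applying the splitting repeatedly to the errors `F - F₀` and `G - G₀`, whose truncated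
variations are at most twice those of `F` and `G`, produces the powers of two. -/
theorem ofReal_abs_tagDiff_le_sum (hσ : Monotone σ) (hτ : Monotone τ) (hσm : ∀ j, σ j ≤ m)
    (hτm : ∀ j, τ j ≤ m) (R : ℕ) {η θ : ℕ → ℝ} (hη : ∀ k, 0 ≤ η k) (hθ : ∀ k, 0 ≤ θ k)
    (hηa : Antitone η) (hθa : Antitone θ) (hG₀ : IsTruncApprox G G₀ (θ 0) m) :
    ENNReal.ofReal |tagDiff σ τ F G m| ≤ ENNReal.ofReal |tagDiff σ τ F G₀ m| +
      (∑ k ∈ Finset.range R,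
        ENNReal.ofReal (2 ^ (k + 1) * η k) * truncVariationOn G (θ (k + 1)) (Iic m) +
      ∑ k ∈ Finset.range (R + 1),
        ENNReal.ofReal (2 ^ k * θ k) * truncVariationOn F (η k) (Iic m)) +
      ENNReal.ofReal (m * (η R * θ R)) := by
  induction R generalizing F G G₀ η θ with
  | zero =>
    obtain ⟨F₀, hF₀⟩ := exists_isTruncApprox F (hη 0) m
    simpa using (ofReal_abs_tagDiff_le_add_add hσ hτ hσm hτm (hθ 0) hF₀ hG₀).trans
      (add_le_add_right (ENNReal.ofReal_le_ofReal (abs_tagDiff_sub_le (hη 0) hF₀ hG₀)) _)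
  | succ R ih =>
    obtain ⟨F₀, hF₀⟩ := exists_isTruncApprox F (hη 0) m
    obtain ⟨G₁, hG₁⟩ := exists_isTruncApprox (G - G₀) (hθ 1) m
    have hG : ENNReal.ofReal |tagDiff σ τ (F - F₀) G₁ m| + ∑ k ∈ Finset.range R,
        ENNReal.ofReal (2 ^ (k + 1) * η (k + 1)) *
          truncVariationOn (G - G₀) (θ (k + 1 + 1)) (Iic m) ≤
        ∑ k ∈ Finset.range (R + 1),
          ENNReal.ofReal (2 ^ (k + 1) * η k) * truncVariationOn G (θ (k + 1)) (Iic m) := by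
      rw [Finset.sum_range_succ', add_comm]
      refine add_le_add (Finset.sum_le_sum fun k _ ↦ ?_) ?_
      · refine (hG₀.ofReal_mul_truncVariationOn_sub_le (hθa (Nat.zero_le _)) _).trans_eq ?_
        rw [pow_succ' 2 (k + 1), mul_assoc]
      · refine (ofReal_abs_tagDiff_le_mul (hη 0) (fun _ _ ↦ hF₀.abs_sub_le _ _) hG₁).trans ?_
        simpa using hG₀.ofReal_mul_truncVariationOn_sub_le (hθa zero_le_one) (η 0)
    have hF : ENNReal.ofReal (θ 0) * truncVariationOn F (η 0) (Iic m) +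
        ∑ k ∈ Finset.range (R + 1), ENNReal.ofReal (2 ^ k * θ (k + 1)) *
          truncVariationOn (F - F₀) (η (k + 1)) (Iic m) ≤
        ∑ k ∈ Finset.range (R + 2),
          ENNReal.ofReal (2 ^ k * θ k) * truncVariationOn F (η k) (Iic m) := by
      rw [Finset.sum_range_succ' _ (R + 1), add_comm, pow_zero, one_mul]
      refine add_le_add_left (Finset.sum_le_sum fun k _ ↦ ?_) _
      refine (hF₀.ofReal_mul_truncVariationOn_sub_le (hηa (Nat.zero_le _)) _).trans_eq ?_
      rw [pow_succ' 2 k, mul_assoc]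
    have hsplit := ofReal_abs_tagDiff_le_add_add hσ hτ hσm hτm (hθ 0) hF₀ hG₀
    have hrest := ih (F := F - F₀) (fun k ↦ hη (k + 1)) (fun k ↦ hθ (k + 1))
      (fun _ _ h ↦ hηa (Nat.succ_le_succ h)) (fun _ _ h ↦ hθa (Nat.succ_le_succ h)) hG₁
    refine (hsplit.trans (add_le_add_right hrest _)).trans (le_trans (le_of_eq ?_)
      (add_le_add_left (add_le_add_right (add_le_add hG hF) _) _))
    ring

theorem ofReal_abs_tagDiff_le_tsum (hσ : Monotone σ) (hτ : Monotone τ) (hσm : ∀ j, σ j ≤ m)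
    (hτm : ∀ j, τ j ≤ m) {η θ : ℕ → ℝ} (hη : ∀ k, 0 ≤ η k) (hθ : ∀ k, 0 ≤ θ k)
    (hηa : Antitone η) (hθa : Antitone θ) (hlim : Tendsto (fun k ↦ η k * θ k) atTop (nhds 0))
    (hG₀ : IsTruncApprox G G₀ (θ 0) m) :
    ENNReal.ofReal |tagDiff σ τ F G m| ≤ ENNReal.ofReal |tagDiff σ τ F G₀ m| +
      (∑' k, ENNReal.ofReal (2 ^ (k + 1) * η k) * truncVariationOn G (θ (k + 1)) (Iic m) +
      ∑' k, ENNReal.ofReal (2 ^ k * θ k) * truncVariationOn F (η k) (Iic m)) := by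
  have herr : Tendsto (fun k ↦ ENNReal.ofReal (m * (η k * θ k))) atTop (nhds 0) := by
    simpa using ENNReal.tendsto_ofReal (hlim.const_mul (m : ℝ))
  refine ge_of_tendsto' (by simpa only [add_zero] using herr.const_add _) fun R ↦
    (ofReal_abs_tagDiff_le_sum hσ hτ hσm hτm R hη hθ hηa hθa hG₀).trans ?_
  exact add_le_add_left (add_le_add_right
    (add_le_add (ENNReal.sum_le_tsum _) (ENNReal.sum_le_tsum _)) _) _

end TagDiff

theorem truncVariationOn_comp_le_truncVar (f : ℝ → ℝ) {s : ℕ → ℝ} {δ a b : ℝ} (hδ : 0 ≤ δ)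
    (hs : Monotone s) (hsab : ∀ i, s i ∈ Icc a b) (t : Set ℕ) :
    truncVariationOn (f ∘ s) δ t ≤ truncVar f δ a b :=
  (truncVariationOn.comp_le hs fun i _ ↦ hsab i).trans (truncVariationOn_Icc_le_truncVar f hδ a b)

/-- The sum `S` of the theorem without its first term, the one that contains `η_{-1}`. -/
noncomputable def truncVarSum (f g : ℝ → ℝ) (a b : ℝ) (η θ : ℕ → ℝ) : ENNReal :=
  ∑' k, ENNReal.ofReal (2 ^ (k + 1) * η k) * truncVar g (θ (k + 1)) a b +
    ∑' k, ENNReal.ofReal (2 ^ k * θ k) * truncVar f (η k) a b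

/-- Truncation levels `η` for `f` and `θ` for `g` along which the expansion of `tagDiff`
converges. -/
structure IsScalePair (η θ : ℕ → ℝ) : Prop where
  fst_nonneg : ∀ k, 0 ≤ η k
  snd_nonneg : ∀ k, 0 ≤ θ k
  fst_antitone : Antitone η
  snd_antitone : Antitone θ
  tendsto_mul : Tendsto (fun k ↦ η k * θ k) atTop (nhds 0)

theorem IsScalePair.ofReal_abs_tagDiff_comp_le {f g : ℝ → ℝ} {a b : ℝ} {s : ℕ → ℝ} {σ τ : ℕ → ℕ}
    {m : ℕ} {G₀ : ℕ → ℝ} {η θ : ℕ → ℝ} (h : IsScalePair η θ) (hs : Monotone s)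
    (hsab : ∀ i, s i ∈ Icc a b) (hσ : Monotone σ) (hτ : Monotone τ) (hσm : ∀ j, σ j ≤ m)
    (hτm : ∀ j, τ j ≤ m) (hG₀ : IsTruncApprox (g ∘ s) G₀ (θ 0) m) :
    ENNReal.ofReal |tagDiff σ τ (f ∘ s) (g ∘ s) m| ≤
      ENNReal.ofReal |tagDiff σ τ (f ∘ s) G₀ m| + truncVarSum f g a b η θ := by
  refine (ofReal_abs_tagDiff_le_tsum hσ hτ hσm hτm h.fst_nonneg h.snd_nonneg h.fst_antitone
    h.snd_antitone h.tendsto_mul hG₀).trans ?_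
  rw [truncVarSum]
  gcongr
  exacts [truncVariationOn_comp_le_truncVar g (h.snd_nonneg _) hs hsab _,
    truncVariationOn_comp_le_truncVar f (h.fst_nonneg _) hs hsab _]

theorem sum_fin_succ_sub_castSucc {n : ℕ} (u : Fin (n + 1) → ℝ) :
    ∑ i : Fin n, (u i.succ - u i.castSucc) = u (Fin.last n) - u 0 := by
  rw [Finset.sum_sub_distrib, sub_eq_sub_iff_add_eq_add, add_comm, ← Fin.sum_univ_succ,
    Fin.sum_univ_castSucc, add_comm]

theorem truncVar_le_of_control {f H : ℝ → ℝ} {δ a b : ℝ} (hH : Monotone H)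
    (h : ∀ u ∈ Icc a b, ∀ v ∈ Icc a b, u < v → |f v - f u| ≤ δ + (H v - H u)) :
    truncVar f δ a b ≤ ENNReal.ofReal (H b - H a) := by
  refine iSup₂_le fun n t ↦ iSup₂_le fun ht htab ↦ ?_
  calc ∑ i : Fin n, ENNReal.ofReal (|f (t i.succ) - f (t i.castSucc)| - δ)
      ≤ ∑ i : Fin n, ENNReal.ofReal (H (t i.succ) - H (t i.castSucc)) :=
        Finset.sum_le_sum fun i _ ↦ ENNReal.ofReal_le_ofReal <|
          sub_le_iff_le_add'.2 (h _ (htab _) _ (htab _) (ht i.castSucc_lt_succ))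
    _ = ENNReal.ofReal (H (t (Fin.last n)) - H (t 0)) := by
        rw [← ENNReal.ofReal_sum_of_nonneg fun i _ ↦
          sub_nonneg.2 (hH (ht i.castSucc_lt_succ).le), sum_fin_succ_sub_castSucc fun i ↦ H (t i)]
    _ ≤ ENNReal.ofReal (H b - H a) :=
        ENNReal.ofReal_le_ofReal (sub_le_sub (hH (htab _).2) (hH (htab _).1))

section Regulated

variable {f : ℝ → ℝ} {a b x : ℝ}

theorem Regulated.exists_tendsto_left (hf : Regulated f a b) (hx : x ∈ Icc a b) :
    ∃ L, Tendsto f (nhdsWithin x (Icc a b ∩ Iio x)) (nhds L) := by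
  rcases hx.1.eq_or_lt with rfl | hax
  · rw [show Icc a b ∩ Iio a = ∅ by grind, nhdsWithin_empty]
    exact ⟨0, tendsto_bot⟩
  · obtain ⟨L, hL⟩ : ∃ L, Tendsto f (nhdsWithin x (Iio x)) (nhds L) :=
      hx.2.eq_or_lt.elim (fun h ↦ h ▸ hf.2.1) fun h ↦ (hf.2.2 x ⟨hax, h⟩).1
    exact ⟨L, hL.mono_left (nhdsWithin_mono x inter_subset_right)⟩

theorem Regulated.exists_tendsto_right (hf : Regulated f a b) (hx : x ∈ Icc a b) :
    ∃ L, Tendsto f (nhdsWithin x (Icc a b ∩ Ioi x)) (nhds L) := by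
  rcases hx.2.eq_or_lt with rfl | hxb
  · rw [show Icc a x ∩ Ioi x = ∅ by grind, nhdsWithin_empty]
    exact ⟨0, tendsto_bot⟩
  · obtain ⟨L, hL⟩ : ∃ L, Tendsto f (nhdsWithin x (Ioi x)) (nhds L) :=
      hx.1.eq_or_lt.elim (fun h ↦ h ▸ hf.1) fun h ↦ (hf.2.2 x ⟨h, hxb⟩).2
    exact ⟨L, hL.mono_left (nhdsWithin_mono x inter_subset_right)⟩

theorem Regulated.exists_ball (hf : Regulated f a b) (hx : x ∈ Icc a b) {ω : ℝ} (hω : 0 < ω) :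
    ∃ ε > 0, ∀ u ∈ Icc a b ∩ Metric.ball x ε, ∀ v ∈ Icc a b ∩ Metric.ball x ε,
      |f u - f v| ≤ ω ∨ x ∈ uIcc u v ∧ ¬ContinuousWithinAt f (Icc a b) x := by
  have key : ∀ {t : Set ℝ} {L : ℝ}, Tendsto f (nhdsWithin x (Icc a b ∩ t)) (nhds L) →
      ∃ ε > 0, ∀ u ∈ Icc a b ∩ Metric.ball x ε, u ∈ t → |f u - L| < ω / 2 := fun h ↦ by
    obtain ⟨ε, hε, h⟩ := Metric.tendsto_nhdsWithin_nhds.1 h (ω / 2) (half_pos hω)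
    exact ⟨ε, hε, fun u hu hut ↦ h ⟨hu.1, hut⟩ hu.2⟩
  by_cases hcont : ContinuousWithinAt f (Icc a b) x
  · obtain ⟨ε, hε, h⟩ := key (t := univ) (by rwa [inter_univ])
    refine ⟨ε, hε, fun u hu v hv ↦ .inl ?_⟩
    grind
  · obtain ⟨L, hL⟩ := hf.exists_tendsto_left hx
    obtain ⟨R, hR⟩ := hf.exists_tendsto_right hx
    obtain ⟨ε₁, hε₁, h₁⟩ := key hL
    obtain ⟨ε₂, hε₂, h₂⟩ := key hR
    refine ⟨min ε₁ ε₂, lt_min hε₁ hε₂, fun u hu v hv ↦ or_iff_not_imp_right.2 fun hxuv ↦ ?_⟩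
    have hside : (u < x ∧ v < x) ∨ (x < u ∧ x < v) := by
      simp only [mem_uIcc, hcont, not_false_eq_true, and_true] at hxuv
      grind
    have hu₁ := h₁ u ⟨hu.1, Metric.ball_subset_ball (min_le_left _ _) hu.2⟩
    have hu₂ := h₂ u ⟨hu.1, Metric.ball_subset_ball (min_le_right _ _) hu.2⟩
    have hv₁ := h₁ v ⟨hv.1, Metric.ball_subset_ball (min_le_left _ _) hv.2⟩
    have hv₂ := h₂ v ⟨hv.1, Metric.ball_subset_ball (min_le_right _ _) hv.2⟩
    simp only [mem_Iio, mem_Ioi] at hu₁ hu₂ hv₁ hv₂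
    grind

theorem Regulated.exists_modulus (hf : Regulated f a b) {ω : ℝ} (hω : 0 < ω) :
    ∃ Z : Finset ℝ, (∀ z ∈ Z, z ∈ Icc a b ∧ ¬ContinuousWithinAt f (Icc a b) z) ∧
      ∃ δ > 0, ∀ u ∈ Icc a b, ∀ v ∈ Icc a b, |u - v| < δ →
        |f u - f v| ≤ ω ∨ ∃ z ∈ Z, z ∈ uIcc u v := by
  classical
  choose! ε hε hball using fun x (hx : x ∈ Icc a b) ↦ hf.exists_ball hx hω
  obtain ⟨Z, hZ, hcover⟩ := isCompact_Icc.elim_nhds_subcover (fun x ↦ Metric.ball x (ε x))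
    fun x hx ↦ Metric.ball_mem_nhds x (hε x hx)
  obtain ⟨δ, hδ, hleb⟩ := lebesgue_number_lemma_of_metric
    (c := fun z : Z ↦ Metric.ball (z : ℝ) (ε z)) isCompact_Icc (fun _ ↦ Metric.isOpen_ball)
    (by simpa [iUnion_subtype] using hcover)
  refine ⟨Z.filter (¬ContinuousWithinAt f (Icc a b) ·), by grind, δ, hδ, fun u hu v hv huv ↦ ?_⟩
  obtain ⟨⟨z, hzZ⟩, hz⟩ := hleb u hu
  refine (hball z (hZ z hzZ) u ⟨hu, hz (Metric.mem_ball_self hδ)⟩ v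
    ⟨hv, hz (Metric.mem_ball'.2 huv)⟩).imp_right fun h ↦ ?_
  exact ⟨z, Finset.mem_filter.2 ⟨hzZ, h.2⟩, h.1⟩

theorem Regulated.isBounded_image (hf : Regulated f a b) :
    Bornology.IsBounded (f '' Icc a b) := by
  refine isCompact_Icc.induction_on (p := fun s ↦ Bornology.IsBounded (f '' s)) (by simp)
    (fun _ _ hst ht ↦ ht.subset (image_mono hst))
    (fun s t hs ht ↦ by simpa only [image_union] using hs.union ht) fun x hx ↦ ?_
  obtain ⟨L, hL⟩ := hf.exists_tendsto_left hx
  obtain ⟨R, hR⟩ := hf.exists_tendsto_right hx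
  obtain ⟨s, hs, hfs⟩ := Metric.exists_isBounded_image_of_tendsto hL
  obtain ⟨t, ht, hft⟩ := Metric.exists_isBounded_image_of_tendsto hR
  refine ⟨insert x (s ∪ t), ?_, ?_⟩
  · have hsplit : Icc a b = insert x (Icc a b ∩ Iio x ∪ Icc a b ∩ Ioi x) := by grind
    rw [hsplit, nhdsWithin_insert, nhdsWithin_union]
    exact mem_sup.2 ⟨mem_insert x _, mem_sup.2 ⟨mem_of_superset hs (by grind),
      mem_of_superset ht (by grind)⟩⟩
  · rw [image_insert_eq, image_union]
    exact (hfs.union hft).insert _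

theorem Regulated.exists_bound (hf : Regulated f a b) : ∃ M > 0, ∀ u ∈ Icc a b, |f u| ≤ M := by
  obtain ⟨M, hM, h⟩ := hf.isBounded_image.exists_pos_norm_le
  exact ⟨M, hM, forall_mem_image.1 h⟩

theorem exists_monotone_one_le_sub (Z : Finset ℝ) :
    ∃ N : ℝ → ℝ, Monotone N ∧ ∀ ⦃u v z⦄, z ∈ Z → u < v → z ∈ Icc u v → 1 ≤ N v - N u := by
  -- Each `z` is counted twice, so that both intervals with endpoint `z` see a jump.
  let c : ℝ → ℝ → ℝ := fun z t ↦ (if z < t then 1 else 0) + if z ≤ t then 1 else 0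
  have hc : ∀ z, Monotone (c z) := fun z u v huv ↦ by simp only [c]; split_ifs <;> linarith
  refine ⟨fun t ↦ ∑ z ∈ Z, c z t, fun u v huv ↦ Finset.sum_le_sum fun z _ ↦ hc z huv,
    fun u v z hz huv hzuv ↦ ?_⟩
  rw [← Finset.sum_sub_distrib]
  refine le_trans ?_ (Finset.single_le_sum (fun z _ ↦ sub_nonneg.2 (hc z huv.le)) hz)
  simp only [c]
  grind

theorem Regulated.exists_control (hf : Regulated f a b) {ω : ℝ} (hω : 0 < ω) :
    ∃ H : ℝ → ℝ, Monotone H ∧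
      ∀ u ∈ Icc a b, ∀ v ∈ Icc a b, u < v → |f v - f u| ≤ ω + (H v - H u) := by
  obtain ⟨M, hM, hfM⟩ := hf.exists_bound
  obtain ⟨Z, -, δ, hδ, hmod⟩ := hf.exists_modulus hω
  obtain ⟨N, hN, hNZ⟩ := exists_monotone_one_le_sub Z
  have hK : Monotone fun t ↦ t / δ + N t := (monotone_id.div_const hδ.le).add hN
  refine ⟨fun t ↦ 2 * M * (t / δ + N t), hK.const_mul (by positivity), fun u hu v hv huv ↦ ?_⟩
  rw [← mul_sub]
  have hle : |f v - f u| ≤ 2 * M := (abs_sub _ _).trans (by linarith [hfM u hu, hfM v hv])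
  by_cases hgood : |f v - f u| ≤ ω
  · nlinarith [hK huv.le]
  · suffices 1 ≤ v / δ + N v - (u / δ + N u) by nlinarith
    rcases le_or_gt δ (v - u) with hlong | hshort
    · have : 1 ≤ v / δ - u / δ := by rwa [← sub_div, one_le_div hδ]
      linarith [hN huv.le]
    · obtain ⟨z, hz, hzuv⟩ := (hmod v hv u hu (by rwa [abs_of_pos (sub_pos.2 huv)])).resolve_left
        hgood
      rw [uIcc_of_ge huv.le] at hzuv
      linarith [hNZ hz huv hzuv, div_le_div_of_nonneg_right huv.le hδ.le]

theorem Regulated.truncVar_lt_top (hf : Regulated f a b) {δ : ℝ} (hδ : 0 < δ) :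
    truncVar f δ a b < ⊤ := by
  obtain ⟨H, hH, hfH⟩ := hf.exists_control hδ
  exact (truncVar_le_of_control hH hfH).trans_lt ENNReal.ofReal_lt_top

end Regulated

/-- `σ` assigns a tag `s (σ j)` to every cell `[s j, s (j + 1)]` of the grid `s 0 ≤ … ≤ s m`; the
tags are grid points within `δ` of both ends of the cell, and they are increasing. -/
structure IsTagging (s : ℕ → ℝ) (m : ℕ) (δ : ℝ) (σ : ℕ → ℕ) : Prop where
  monotone : Monotone σ
  le : ∀ j, σ j ≤ m
  abs_sub_lt : ∀ j < m, |s (σ j) - s j| < δ ∧ |s (σ j) - s (j + 1)| < δ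

theorem abs_tagDiff_le_of_exists_mem {ι : Type*} {σ τ : ℕ → ℕ} {F y : ℕ → ℝ} {m : ℕ} {ω D v : ℝ}
    {Z : Finset ι} {W : ι → Finset ℕ} (hω : 0 ≤ ω) (hD : 0 ≤ D)
    (hF : ∀ j < m, |F (σ j) - F (τ j)| ≤ D)
    (hbad : ∀ j < m, |F (σ j) - F (τ j)| ≤ ω ∨ ∃ z ∈ Z, j ∈ W z)
    (hW : ∀ z ∈ Z, ∑ j ∈ W z, |y (j + 1) - y j| ≤ v) :
    |tagDiff σ τ F y m| ≤ ω * seqVar y m + Z.card * (D * v) := by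
  have hterm : ∀ j ∈ Finset.range m, |(F (σ j) - F (τ j)) * (y (j + 1) - y j)| ≤
      ω * |y (j + 1) - y j| + ∑ z ∈ Z, if j ∈ W z then D * |y (j + 1) - y j| else 0 := by
    intro j hj
    rw [Finset.mem_range] at hj
    have hnn : ∀ z ∈ Z, 0 ≤ if j ∈ W z then D * |y (j + 1) - y j| else 0 := fun z _ ↦ by positivity
    rw [abs_mul]
    rcases hbad j hj with hgood | ⟨z, hz, hjz⟩
    · exact le_add_of_le_of_nonneg (mul_le_mul_of_nonneg_right hgood (abs_nonneg _))
        (Finset.sum_nonneg hnn)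
    · refine le_add_of_nonneg_of_le (by positivity) (le_trans ?_ (Finset.single_le_sum hnn hz))
      rw [if_pos hjz]
      exact mul_le_mul_of_nonneg_right (hF j hj) (abs_nonneg _)
  refine (Finset.abs_sum_le_sum_abs _ _).trans ((Finset.sum_le_sum hterm).trans ?_)
  rw [Finset.sum_add_distrib, ← Finset.mul_sum, Finset.sum_comm, ← nsmul_eq_mul]
  refine add_le_add_right (Finset.sum_le_card_nsmul _ _ _ fun z hz ↦ ?_) _
  rw [Finset.sum_ite_mem, ← Finset.mul_sum]
  refine mul_le_mul_of_nonneg_left (le_trans ?_ (hW z hz)) hD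
  exact Finset.sum_le_sum_of_subset_of_nonneg Finset.inter_subset_right fun _ _ _ ↦ abs_nonneg _

theorem IsTruncApprox.sum_abs_le_of_ordConnected {x y s : ℕ → ℝ} {θ ρ c : ℝ} {m : ℕ}
    (h : IsTruncApprox x y θ m) (hs : Monotone s) (hρ₀ : 0 ≤ ρ) (hρ : 2 * ρ ≤ θ) {I : Set ℝ}
    [I.OrdConnected] {W : Finset ℕ} (hW : ∀ j ∈ W, s j ∈ I ∧ s (j + 1) ∈ I)
    (hx : ∀ i, s i ∈ I → |x i - c| ≤ ρ) : ∑ j ∈ W, |y (j + 1) - y j| ≤ 2 * ρ := by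
  rcases W.eq_empty_or_nonempty with rfl | hne
  · simpa using hρ₀
  set p := W.min' hne
  set q := W.max' hne
  have hpq : p ≤ q + 1 := (W.min'_le_max' hne).trans q.le_succ
  refine le_trans ?_ (h.seqVar_sub_le (c := c) hρ hpq fun i hi ↦ hx i ?_)
  · rw [← sum_Ico_abs_eq_seqVar_sub y hpq]
    refine Finset.sum_le_sum_of_subset_of_nonneg (fun j hj ↦ ?_) fun _ _ _ ↦ abs_nonneg _
    exact Finset.mem_Ico.2 ⟨W.min'_le j hj, Nat.lt_succ_of_le (W.le_max' j hj)⟩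
  · exact OrdConnected.out ‹_› (hW p (W.min'_mem hne)).1 (hW q (W.max'_mem hne)).2
      ⟨hs hi.1, hs hi.2⟩

theorem exists_forall_finset_abs_sub_le {g : ℝ → ℝ} {K : Set ℝ} {Z : Finset ℝ}
    (hg : ∀ z ∈ Z, ContinuousWithinAt g K z) {ρ : ℝ} (hρ : 0 < ρ) :
    ∃ δ > 0, ∀ z ∈ Z, ∀ u ∈ K, |u - z| < δ → |g u - g z| ≤ ρ := by
  have hev : ∀ z ∈ Z, ∀ᶠ δ in nhdsWithin (0 : ℝ) (Ioi 0),
      ∀ u ∈ K, |u - z| < δ → |g u - g z| ≤ ρ := fun z hz ↦ by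
    obtain ⟨δ, hδ, h⟩ := Metric.continuousWithinAt_iff.1 (hg z hz) ρ hρ
    filter_upwards [Ioo_mem_nhdsGT hδ] with δ' hδ' u hu huz
    exact (h hu (huz.trans hδ'.2)).le
  obtain ⟨δ, h, hδ⟩ := (((Finset.eventually_all Z).2 hev).and self_mem_nhdsWithin).exists
  exact ⟨δ, hδ, h⟩

theorem abs_tagDiff_comp_le {f g : ℝ → ℝ} {a b M ω δ ρ θ : ℝ} {Z : Finset ℝ} {s y : ℕ → ℝ} {m : ℕ}
    {σ τ : ℕ → ℕ} (hs : Monotone s) (hsab : ∀ i, s i ∈ Icc a b) (hσ : IsTagging s m δ σ)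
    (hτ : IsTagging s m δ τ) (hy : IsTruncApprox (g ∘ s) y θ m) (hω : 0 ≤ ω) (hρ₀ : 0 ≤ ρ)
    (hρ : 2 * ρ ≤ θ) (hfM : ∀ u ∈ Icc a b, |f u| ≤ M)
    (hfZ : ∀ u ∈ Icc a b, ∀ v ∈ Icc a b, |u - v| < 2 * δ →
      |f u - f v| ≤ ω ∨ ∃ z ∈ Z, z ∈ uIcc u v)
    (hgZ : ∀ z ∈ Z, ∀ u ∈ Icc a b, |u - z| < δ → |g u - g z| ≤ ρ) :
    |tagDiff σ τ (f ∘ s) y m| ≤ ω * seqVar y m + Z.card * (2 * M * (2 * ρ)) := by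
  have hM : 0 ≤ M := (abs_nonneg _).trans (hfM _ (hsab 0))
  classical
  let W : ℝ → Finset ℕ := fun z ↦
    {j ∈ Finset.range m | s j ∈ Metric.ball z δ ∧ s (j + 1) ∈ Metric.ball z δ}
  refine abs_tagDiff_le_of_exists_mem (W := W) hω (by positivity) (fun j _ ↦ ?_) (fun j hj ↦ ?_)
    fun z hz ↦ ?_
  · rw [two_mul]
    exact (abs_sub _ _).trans (add_le_add (hfM _ (hsab (σ j))) (hfM _ (hsab (τ j))))
  · have hσj := hσ.abs_sub_lt j hj
    have hτj := hτ.abs_sub_lt j hj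
    refine (hfZ _ (hsab (σ j)) _ (hsab (τ j)) ?_).imp_right fun ⟨z, hz, hzuv⟩ ↦ ⟨z, hz, ?_⟩
    · grind
    · have hball : ∀ c, |s (σ j) - c| < δ → |s (τ j) - c| < δ → c ∈ Metric.ball z δ :=
        fun c hc hc' ↦ Metric.mem_ball'.2 <|
          (convex_ball c δ).ordConnected.uIcc_subset hc hc' hzuv
      exact Finset.mem_filter.2 ⟨Finset.mem_range.2 hj, hball _ hσj.1 hτj.1, hball _ hσj.2 hτj.2⟩
  · have := (convex_ball z δ).ordConnected
    exact hy.sum_abs_le_of_ordConnected (I := Metric.ball z δ) hs hρ₀ hρ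
      (fun j hj ↦ (Finset.mem_filter.1 hj).2) fun i hi ↦ hgZ z hz _ (hsab i) hi

theorem exists_forall_abs_tagDiff_comp_le {f g : ℝ → ℝ} {a b : ℝ} (hf : Regulated f a b)
    (hg : Regulated g a b) (hfg : NoCommonDiscont f g a b) {θ ε : ℝ} (hθ : 0 < θ) (hε : 0 < ε) :
    ∃ δ > 0, ∀ {s y : ℕ → ℝ} {m : ℕ} {σ τ : ℕ → ℕ}, Monotone s → (∀ i, s i ∈ Icc a b) →
      IsTagging s m δ σ → IsTagging s m δ τ → IsTruncApprox (g ∘ s) y θ m →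
      |tagDiff σ τ (f ∘ s) y m| ≤ ε := by
  obtain ⟨M, hM, hfM⟩ := hf.exists_bound
  set C := (truncVar g θ a b).toReal
  have hC : 0 ≤ C := ENNReal.toReal_nonneg
  obtain ⟨Z, hZ, δ₁, hδ₁, hfZ⟩ := hf.exists_modulus (ω := ε / (2 * (C + 1))) (by positivity)
  set ρ := min (θ / 2) (ε / (8 * M * (Z.card + 1)))
  have hρ : 0 < ρ := lt_min (by positivity) (by positivity)
  obtain ⟨δ₂, hδ₂, hgZ⟩ := exists_forall_finset_abs_sub_le
    (fun z hz ↦ (hfg z (hZ z hz).1).resolve_left (hZ z hz).2) hρ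
  refine ⟨min (δ₁ / 2) δ₂, by positivity, fun {s y m σ τ} hs hsab hσ hτ hy ↦ ?_⟩
  have hseq : seqVar y m ≤ C := by
    rw [← ENNReal.ofReal_le_iff_le_toReal (hg.truncVar_lt_top hθ).ne]
    exact hy.seqVar_le.trans (truncVariationOn_comp_le_truncVar g hθ.le hs hsab _)
  have key := abs_tagDiff_comp_le hs hsab hσ hτ hy (by positivity) hρ.le
    (by linarith [min_le_left (θ / 2) (ε / (8 * M * (Z.card + 1)))]) hfM
    (fun u hu v hv huv ↦ hfZ u hu v hv
      (huv.trans_le (by linarith [min_le_left (δ₁ / 2) δ₂])))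
    (fun z hz u hu huz ↦ hgZ z hz u hu (huz.trans_le (min_le_right _ _)))
  have hsmall₁ : ε / (2 * (C + 1)) * seqVar y m ≤ ε / 2 := by
    rw [div_mul_eq_mul_div, div_le_iff₀ (by positivity)]
    nlinarith
  have hsmall₂ : (Z.card : ℝ) * (2 * M * (2 * ρ)) ≤ ε / 2 := by
    have := (le_div_iff₀ (by positivity)).1 (min_le_right (θ / 2) (ε / (8 * M * (Z.card + 1))))
    nlinarith [mul_pos hM hρ]
  linarith

/-- `t` and `ξ` are the points and the tags of a tagged partition of `[a;b]` of mesh less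
than `δ`. -/
structure IsTaggedPartition (a b δ : ℝ) {n : ℕ} (t : Fin (n + 1) → ℝ) (ξ : Fin n → ℝ) : Prop where
  strictMono : StrictMono t
  zero : t 0 = a
  last : t (Fin.last n) = b
  tag_mem : ∀ i : Fin n, ξ i ∈ Icc (t i.castSucc) (t i.succ)
  sub_lt : ∀ i : Fin n, t i.succ - t i.castSucc < δ

/-- The Riemann–Stieltjes sum `∑ f(ξ_i) (g(t_{i+1}) - g(t_i))`. -/
def riemannSum (f g : ℝ → ℝ) {n : ℕ} (t : Fin (n + 1) → ℝ) (ξ : Fin n → ℝ) : ℝ :=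
  ∑ i : Fin n, f (ξ i) * (g (t i.succ) - g (t i.castSucc))

/-- The set of all Riemann–Stieltjes sums of `f` with respect to `g` on `[a;b]` of mesh less
than `δ`. -/
def riemannSums (f g : ℝ → ℝ) (a b δ : ℝ) : Set ℝ :=
  {x | ∃ (n : ℕ) (t : Fin (n + 1) → ℝ) (ξ : Fin n → ℝ),
    IsTaggedPartition a b δ t ξ ∧ riemannSum f g t ξ = x}

/-- The filter of Riemann–Stieltjes sums as the mesh tends to `0`; the integral is its limit. -/
def riemannFilter (f g : ℝ → ℝ) (a b : ℝ) : Filter ℝ :=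
  ⨅ δ ∈ Ioi (0 : ℝ), Filter.principal (riemannSums f g a b δ)

section Riemann

variable {f g : ℝ → ℝ} {a b δ : ℝ}

theorem riemannSums_mono (f g : ℝ → ℝ) (a b : ℝ) : Monotone (riemannSums f g a b) :=
  fun _ _ hδ _ ⟨n, t, ξ, h, hx⟩ ↦
    ⟨n, t, ξ, { h with sub_lt := fun i ↦ (h.sub_lt i).trans_le hδ }, hx⟩

theorem hasBasis_riemannFilter (f g : ℝ → ℝ) (a b : ℝ) :
    (riemannFilter f g a b).HasBasis (0 < ·) (riemannSums f g a b) :=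
  hasBasis_biInf_principal' (fun δ hδ δ' hδ' ↦ ⟨min δ δ', mem_Ioi.2 (lt_min hδ hδ'),
    riemannSums_mono f g a b (min_le_left _ _), riemannSums_mono f g a b (min_le_right _ _)⟩)
    ⟨1, mem_Ioi.2 one_pos⟩

theorem rsIntegral_iff_riemannFilter_le {I : ℝ} :
    RSIntegral f g a b I ↔ riemannFilter f g a b ≤ nhds I := by
  rw [(hasBasis_riemannFilter f g a b).le_basis_iff Metric.nhds_basis_ball]
  refine forall₂_congr fun ε _ ↦ exists_congr fun δ ↦ and_congr_right fun _ ↦ ⟨?_, ?_⟩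
  · rintro h _ ⟨n, t, ξ, ht, rfl⟩
    exact h n t ξ ht.strictMono ht.zero ht.last ht.tag_mem ht.sub_lt
  · exact fun h n t ξ ht h₀ hn hξ hδ ↦ h ⟨n, t, ξ, ⟨ht, h₀, hn, hξ, hδ⟩, rfl⟩

theorem riemannSums_nonempty (f g : ℝ → ℝ) (hab : a < b) (hδ : 0 < δ) :
    (riemannSums f g a b δ).Nonempty := by
  obtain ⟨n, hn⟩ := exists_nat_gt ((b - a) / δ)
  have hba : 0 < b - a := sub_pos.2 hab
  have hn₀ : (0 : ℝ) < n := (div_pos hba hδ).trans hn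
  have hstep : 0 < (b - a) / n := div_pos hba hn₀
  let t : ℕ → ℝ := fun i ↦ a + i * ((b - a) / n)
  have ht : ∀ i, t (i + 1) - t i = (b - a) / n := fun i ↦ by simp only [t]; push_cast; ring
  have hmono : StrictMono t := strictMono_nat_of_lt_succ fun i ↦ sub_pos.1 (ht i ▸ hstep)
  refine ⟨_, n, fun i ↦ t i, fun i ↦ t i, ⟨fun i j hij ↦ hmono hij, by simp [t], ?_,
    fun i ↦ ⟨le_rfl, (hmono (Nat.lt_succ_self i)).le⟩, fun i ↦ ?_⟩, rfl⟩
  · simp only [t, Fin.val_last]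
    rw [mul_div_cancel₀ _ hn₀.ne', add_sub_cancel]
  · simp only [Fin.val_succ, Fin.val_castSucc, ht]
    exact (div_lt_comm₀ hδ hn₀).1 hn

theorem riemannFilter_neBot (f g : ℝ → ℝ) (hab : a < b) : (riemannFilter f g a b).NeBot :=
  (hasBasis_riemannFilter f g a b).neBot_iff.2 (riemannSums_nonempty f g hab)

theorem exists_rsIntegral_of_forall_abs_sub_le (hab : a < b)
    (h : ∀ ε > 0, ∃ δ > 0, ∀ x ∈ riemannSums f g a b δ, ∀ y ∈ riemannSums f g a b δ,
      |x - y| ≤ ε) : ∃ I, RSIntegral f g a b I := by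
  have hcauchy : Cauchy (riemannFilter f g a b) := by
    refine Metric.uniformity_basis_dist_le.cauchy_iff.2
      ⟨riemannFilter_neBot f g hab, fun ε hε ↦ ?_⟩
    obtain ⟨δ, hδ, hx⟩ := h ε hε
    exact ⟨_, (hasBasis_riemannFilter f g a b).mem_of_mem hδ, hx⟩
  obtain ⟨I, hI⟩ := CompleteSpace.complete hcauchy
  exact ⟨I, rsIntegral_iff_riemannFilter_le.2 hI⟩

theorem RSIntegral.ofReal_abs_sub_le {I c : ℝ} {S : ENNReal} (hI : RSIntegral f g a b I)
    (hab : a < b) (hδ : 0 < δ)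
    (h : ∀ x ∈ riemannSums f g a b δ, ENNReal.ofReal |x - c| ≤ S) :
    ENNReal.ofReal |I - c| ≤ S := by
  have := riemannFilter_neBot f g hab
  have hcont : Continuous fun x : ℝ ↦ ENNReal.ofReal |x - c| :=
    ENNReal.continuous_ofReal.comp (by fun_prop)
  exact le_of_tendsto ((hcont.tendsto I).mono_left (rsIntegral_iff_riemannFilter_le.1 hI))
    (mem_of_superset ((hasBasis_riemannFilter f g a b).mem_of_mem hδ) h)

end Riemann

/-- `s 0 < … < s m` are the elements of `P`, `s` is constant from `m` on, and `idx x` is the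
position of `x ∈ P`. -/
structure IsEnumeration (P : Finset ℝ) (s : ℕ → ℝ) (m : ℕ) (idx : ℝ → ℕ) : Prop where
  monotone : Monotone s
  mem : ∀ i, s i ∈ P
  idx_monotoneOn : MonotoneOn idx P
  apply_idx : ∀ x ∈ P, s (idx x) = x
  idx_apply : ∀ i, idx (s i) = min i m

theorem exists_isEnumeration {P : Finset ℝ} (hP : P.Nonempty) :
    ∃ s m idx, IsEnumeration P s m idx := by
  obtain ⟨m, hm⟩ := Nat.exists_eq_succ_of_ne_zero hP.card_ne_zero
  let e := P.orderIsoOfFin hm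
  let idx : ℝ → ℕ := fun x ↦ if h : x ∈ P then e.symm ⟨x, h⟩ else 0
  have hidx : ∀ y : P, idx y = e.symm y := fun y ↦ dif_pos y.2
  refine ⟨fun i ↦ e ⟨min i m, Nat.lt_succ_of_le (min_le_right i m)⟩, m, idx,
    fun i j hij ↦ ?_, fun i ↦ (e _).2, fun x hx y hy hxy ↦ ?_, fun x hx ↦ ?_, fun i ↦ ?_⟩
  · exact Subtype.coe_le_coe.2 (e.monotone (min_le_min_right m hij))
  · rw [hidx ⟨x, hx⟩, hidx ⟨y, hy⟩]
    exact e.symm.monotone hxy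
  · rw [hidx ⟨x, hx⟩]
    have := (e.symm ⟨x, hx⟩).is_le
    simp [this]
  · rw [hidx, e.symm_apply_apply]

namespace IsEnumeration

variable {P : Finset ℝ} {s : ℕ → ℝ} {m : ℕ} {idx : ℝ → ℕ} {x : ℝ}

theorem idx_le (h : IsEnumeration P s m idx) (hx : x ∈ P) : idx x ≤ m := by
  have := h.idx_apply (idx x)
  rw [h.apply_idx x hx] at this
  exact this ▸ min_le_right _ _

theorem idx_eq_zero (h : IsEnumeration P s m idx) (hx : IsLeast (P : Set ℝ) x) : idx x = 0 := by
  simpa [h.idx_apply] using h.idx_monotoneOn hx.1 (h.mem 0) (hx.2 (h.mem 0))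

theorem idx_eq_last (h : IsEnumeration P s m idx) (hx : IsGreatest (P : Set ℝ) x) : idx x = m :=
  (h.idx_le hx.1).antisymm <| by
    simpa [h.idx_apply] using h.idx_monotoneOn (h.mem m) hx.1 (hx.2 (h.mem m))

end IsEnumeration

theorem exists_castSucc_le_lt_succ {n j : ℕ} {κ : Fin (n + 1) → ℕ} (h₀ : κ 0 ≤ j)
    (hn : j < κ (Fin.last n)) : ∃ i : Fin n, κ i.castSucc ≤ j ∧ j < κ i.succ := by
  by_contra! h
  exact hn.not_ge (Fin.induction (motive := (κ · ≤ j)) h₀ (fun i hi ↦ h i hi) (Fin.last n))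

theorem sum_fin_sum_Ico (h : ℕ → ℝ) {n : ℕ} {κ : Fin (n + 1) → ℕ} (hκ : Monotone κ) :
    ∑ i : Fin n, ∑ j ∈ Finset.Ico (κ i.castSucc) (κ i.succ), h j =
      ∑ j ∈ Finset.Ico (κ 0) (κ (Fin.last n)), h j := by
  simp_rw [Finset.sum_Ico_eq_sub h (hκ (Fin.castSucc_le_succ _)),
    Finset.sum_Ico_eq_sub h (hκ (Fin.zero_le (Fin.last n)))]
  exact sum_fin_succ_sub_castSucc fun i ↦ ∑ j ∈ Finset.range (κ i), h j

/-- The tag function on the grid `ℕ` which equals `l i` on the block from `κ i` to `κ (i + 1)`, for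
monotone `κ` and `l`. It is a supremum so that it is monotone without further ado. -/
def blockTag {n : ℕ} (κ : Fin (n + 1) → ℕ) (l : Fin n → ℕ) (j : ℕ) : ℕ :=
  (Finset.univ.filter fun i : Fin n ↦ κ i.castSucc ≤ j).sup l

section BlockTag

variable {n : ℕ} {κ : Fin (n + 1) → ℕ} {l : Fin n → ℕ}

theorem blockTag_monotone (κ : Fin (n + 1) → ℕ) (l : Fin n → ℕ) : Monotone (blockTag κ l) :=
  fun _ _ h ↦ Finset.sup_mono (Finset.monotone_filter_right _ fun _ _ hi ↦ hi.trans h)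

theorem blockTag_eq (hκ : Monotone κ) (hl : Monotone l) {i : Fin n} {j : ℕ}
    (hj : j ∈ Ico (κ i.castSucc) (κ i.succ)) : blockTag κ l j = l i := by
  refine le_antisymm (Finset.sup_le fun i' hi' ↦ hl (not_lt.1 fun hlt ↦ ?_))
    (Finset.le_sup (Finset.mem_filter.2 ⟨Finset.mem_univ i, hj.1⟩))
  exact (hj.2.trans_le (hκ (Fin.succ_le_castSucc_iff.2 hlt))).not_ge (Finset.mem_filter.1 hi').2

theorem sum_fin_eq_sum_range_blockTag (F G : ℕ → ℝ) (hκ : Monotone κ) (hl : Monotone l)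
    (h₀ : κ 0 = 0) :
    ∑ i : Fin n, F (l i) * (G (κ i.succ) - G (κ i.castSucc)) =
      ∑ j ∈ Finset.range (κ (Fin.last n)), F (blockTag κ l j) * (G (j + 1) - G j) := by
  rw [Finset.range_eq_Ico, ← h₀, ← sum_fin_sum_Ico _ hκ]
  refine Finset.sum_congr rfl fun i _ ↦ ?_
  rw [← Finset.sum_Ico_sub G (hκ i.castSucc_le_succ), Finset.mul_sum]
  refine Finset.sum_congr rfl fun j hj ↦ ?_
  rw [blockTag_eq hκ hl (Finset.mem_Ico.1 hj)]

theorem isTagging_blockTag {s : ℕ → ℝ} {m : ℕ} {δ : ℝ} (hs : Monotone s) (hκ : Monotone κ)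
    (hl : Monotone l) (h₀ : κ 0 = 0) (hlast : κ (Fin.last n) = m) (hlm : ∀ i, l i ≤ m)
    (htag : ∀ i : Fin n, s (l i) ∈ Icc (s (κ i.castSucc)) (s (κ i.succ)))
    (hmesh : ∀ i : Fin n, s (κ i.succ) - s (κ i.castSucc) < δ) :
    IsTagging s m δ (blockTag κ l) where
  monotone := blockTag_monotone κ l
  le _ := Finset.sup_le fun i _ ↦ hlm i
  abs_sub_lt j hj := by
    obtain ⟨i, hi⟩ := exists_castSucc_le_lt_succ (h₀.trans_le j.zero_le) (hj.trans_eq hlast.symm)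
    rw [blockTag_eq hκ hl hi]
    have hclose : ∀ x ∈ Icc (s (κ i.castSucc)) (s (κ i.succ)), |s (l i) - x| < δ := fun x hx ↦
      (abs_sub_le_of_le_of_le (htag i).1 (htag i).2 hx.1 hx.2).trans_lt (hmesh i)
    exact ⟨hclose _ ⟨hs hi.1, hs hi.2.le⟩, hclose _ ⟨hs (hi.1.trans j.le_succ), hs hi.2⟩⟩

end BlockTag

namespace IsTaggedPartition

variable {f g : ℝ → ℝ} {a b δ : ℝ} {n : ℕ} {t : Fin (n + 1) → ℝ} {ξ : Fin n → ℝ}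

/-- The set of the points and tags of a tagged partition. -/
noncomputable def points (t : Fin (n + 1) → ℝ) (ξ : Fin n → ℝ) : Finset ℝ :=
  Finset.univ.image t ∪ Finset.univ.image ξ

theorem mem_points (t : Fin (n + 1) → ℝ) (ξ : Fin n → ℝ) (i : Fin (n + 1)) : t i ∈ points t ξ :=
  Finset.mem_union_left _ (Finset.mem_image_of_mem t (Finset.mem_univ i))

theorem tag_mem_points (t : Fin (n + 1) → ℝ) (ξ : Fin n → ℝ) (i : Fin n) : ξ i ∈ points t ξ :=
  Finset.mem_union_right _ (Finset.mem_image_of_mem ξ (Finset.mem_univ i))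

theorem mem_Icc (h : IsTaggedPartition a b δ t ξ) (i : Fin (n + 1)) : t i ∈ Icc a b :=
  ⟨h.zero ▸ h.strictMono.monotone (Fin.zero_le i), h.last ▸ h.strictMono.monotone (Fin.le_last i)⟩

theorem points_subset_Icc (h : IsTaggedPartition a b δ t ξ) :
    (points t ξ : Set ℝ) ⊆ Icc a b := by
  intro x hx
  simp only [points, Finset.coe_union, Finset.coe_image, Finset.coe_univ, image_univ] at hx
  rcases hx with ⟨i, rfl⟩ | ⟨i, rfl⟩
  · exact h.mem_Icc i
  · exact Icc_subset_Icc (h.mem_Icc _).1 (h.mem_Icc _).2 (h.tag_mem i)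

theorem tag_monotone (h : IsTaggedPartition a b δ t ξ) : Monotone ξ := fun i j hij ↦ by
  rcases hij.eq_or_lt with rfl | hlt
  · exact le_rfl
  · exact (h.tag_mem i).2.trans
      ((h.strictMono.monotone (Fin.succ_le_castSucc_iff.2 hlt)).trans (h.tag_mem j).1)

variable {P : Finset ℝ} {s : ℕ → ℝ} {m : ℕ} {idx : ℝ → ℕ}

theorem isLeast (h : IsTaggedPartition a b δ t ξ) (hP : points t ξ ⊆ P)
    (hPab : (P : Set ℝ) ⊆ Icc a b) : IsLeast (P : Set ℝ) a :=
  ⟨h.zero ▸ hP (mem_points t ξ 0), fun _ hx ↦ (hPab hx).1⟩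

theorem isGreatest (h : IsTaggedPartition a b δ t ξ) (hP : points t ξ ⊆ P)
    (hPab : (P : Set ℝ) ⊆ Icc a b) : IsGreatest (P : Set ℝ) b :=
  ⟨h.last ▸ hP (mem_points t ξ (Fin.last n)), fun _ hx ↦ (hPab hx).2⟩

theorem exists_isTagging (h : IsTaggedPartition a b δ t ξ) (hs : IsEnumeration P s m idx)
    (hP : points t ξ ⊆ P) (hPab : (P : Set ℝ) ⊆ Icc a b) :
    ∃ σ, IsTagging s m δ σ ∧ riemannSum f g t ξ =
      ∑ j ∈ Finset.range m, f (s (σ j)) * (g (s (j + 1)) - g (s j)) := by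
  have hξP := fun i ↦ hP (tag_mem_points t ξ i)
  have htP := fun i ↦ hP (mem_points t ξ i)
  have hst : ∀ i, s (idx (t i)) = t i := fun i ↦ hs.apply_idx _ (htP i)
  have hsξ : ∀ i, s (idx (ξ i)) = ξ i := fun i ↦ hs.apply_idx _ (hξP i)
  have hκ : Monotone fun i ↦ idx (t i) := fun i j hij ↦
    hs.idx_monotoneOn (htP i) (htP j) (h.strictMono.monotone hij)
  have hl : Monotone fun i ↦ idx (ξ i) := fun i j hij ↦
    hs.idx_monotoneOn (hξP i) (hξP j) (h.tag_monotone hij)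
  have h₀ : idx (t 0) = 0 := h.zero ▸ hs.idx_eq_zero (h.isLeast hP hPab)
  have hlast : idx (t (Fin.last n)) = m := h.last ▸ hs.idx_eq_last (h.isGreatest hP hPab)
  refine ⟨blockTag (fun i ↦ idx (t i)) fun i ↦ idx (ξ i),
    isTagging_blockTag hs.monotone hκ hl h₀ hlast (fun i ↦ hs.idx_le (hξP i)) ?_ ?_, ?_⟩
  · simpa only [hst, hsξ] using h.tag_mem
  · simpa only [hst] using h.sub_lt
  · rw [← hlast]
    simpa only [riemannSum, Function.comp_apply, hst, hsξ] using
      sum_fin_eq_sum_range_blockTag (f ∘ s) (g ∘ s) hκ hl h₀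

end IsTaggedPartition

theorem tagDiff_eq_sub (σ τ : ℕ → ℕ) (F G : ℕ → ℝ) (m : ℕ) :
    tagDiff σ τ F G m = ∑ j ∈ Finset.range m, F (σ j) * (G (j + 1) - G j) -
      ∑ j ∈ Finset.range m, F (τ j) * (G (j + 1) - G j) := by
  simp only [tagDiff, sub_mul, Finset.sum_sub_distrib]

theorem exists_sub_eq_tagDiff {f g : ℝ → ℝ} {a b δ x y : ℝ} (hx : x ∈ riemannSums f g a b δ)
    (hy : y ∈ riemannSums f g a b δ) :
    ∃ s m σ τ, Monotone s ∧ (∀ i, s i ∈ Icc a b) ∧ IsTagging s m δ σ ∧ IsTagging s m δ τ ∧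
      x - y = tagDiff σ τ (f ∘ s) (g ∘ s) m := by
  obtain ⟨n, t, ξ, h, rfl⟩ := hx
  obtain ⟨n', t', ξ', h', rfl⟩ := hy
  set P := IsTaggedPartition.points t ξ ∪ IsTaggedPartition.points t' ξ'
  have hPab : (P : Set ℝ) ⊆ Icc a b :=
    (Finset.coe_union _ _).trans_subset (union_subset h.points_subset_Icc h'.points_subset_Icc)
  obtain ⟨s, m, idx, hs⟩ := exists_isEnumeration (P := P)
    ⟨_, Finset.mem_union_left _ (IsTaggedPartition.mem_points t ξ 0)⟩
  obtain ⟨σ, hσ, hsum⟩ := h.exists_isTagging (f := f) (g := g) hs Finset.subset_union_left hPab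
  obtain ⟨τ, hτ, hsum'⟩ := h'.exists_isTagging (f := f) (g := g) hs Finset.subset_union_right hPab
  exact ⟨s, m, σ, τ, hs.monotone, fun i ↦ hPab (hs.mem i), hσ, hτ,
    by rw [hsum, hsum', tagDiff_eq_sub]; rfl⟩

theorem exists_sub_mul_eq_tagDiff {f g : ℝ → ℝ} {a b δ x : ℝ} (hx : x ∈ riemannSums f g a b δ) :
    ∃ s m σ, Monotone s ∧ (∀ i, s i ∈ Icc a b) ∧ s 0 = a ∧ IsTagging s m δ σ ∧
      x - f a * (g b - g a) = tagDiff σ (fun _ ↦ 0) (f ∘ s) (g ∘ s) m := by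
  obtain ⟨n, t, ξ, h, rfl⟩ := hx
  have hPab := h.points_subset_Icc
  obtain ⟨s, m, idx, hs⟩ := exists_isEnumeration ⟨_, IsTaggedPartition.mem_points t ξ 0⟩
  obtain ⟨σ, hσ, hsum⟩ := h.exists_isTagging (f := f) (g := g) hs subset_rfl hPab
  have ha := h.isLeast subset_rfl hPab
  have hb := h.isGreatest subset_rfl hPab
  have hs₀ : s 0 = a := hs.idx_eq_zero ha ▸ hs.apply_idx a ha.1
  have hsm : s m = b := hs.idx_eq_last hb ▸ hs.apply_idx b hb.1
  refine ⟨s, m, σ, hs.monotone, fun i ↦ hPab (hs.mem i), hs₀, hσ, ?_⟩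
  rw [tagDiff_eq_sub, ← Finset.mul_sum, Finset.sum_range_sub, hsum]
  simp only [Function.comp_apply, hs₀, hsm]

section Scales

variable {f g : ℝ → ℝ} {a b : ℝ} {η θ : ℕ → ℝ}

theorem truncVar_eq_zero_of_forall_abs_sub_le {c e : ℝ} (he : ∀ u ∈ Icc a b, |f u - c| ≤ e) :
    truncVar f (2 * e) a b = 0 := by
  have h := truncVar_le_of_control (f := f) (a := a) (b := b) (δ := 2 * e) (H := fun _ ↦ 0)
    monotone_const fun u hu v hv _ ↦ by
      have := abs_sub_le (f v) c (f u)
      rw [abs_sub_comm c] at this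
      linarith [he u hu, he v hv]
  simpa using h

theorem truncVarSum_single (f g : ℝ → ℝ) (a b c d : ℝ) :
    truncVarSum f g a b (Pi.single 0 c) (Pi.single 0 d) =
      ENNReal.ofReal (2 * c) * truncVar g 0 a b + ENNReal.ofReal d * truncVar f c a b := by
  rw [truncVarSum, tsum_eq_single 0 fun k hk ↦ by simp [hk],
    tsum_eq_single 0 fun k hk ↦ by simp [hk]]
  simp

namespace IsScalePair

theorem single {c d : ℝ} (hc : 0 ≤ c) (hd : 0 ≤ d) :
    IsScalePair (Pi.single 0 c) (Pi.single 0 d) := by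
  have hnonneg : ∀ x : ℝ, 0 ≤ x → ∀ k : ℕ, 0 ≤ (Pi.single 0 x : ℕ → ℝ) k := fun x hx ↦
    show (0 : ℕ → ℝ) ≤ Pi.single 0 x from Pi.single_nonneg.2 hx
  have hanti : ∀ x : ℝ, 0 ≤ x → Antitone (Pi.single 0 x : ℕ → ℝ) := fun x hx ↦
    antitone_nat_of_succ_le fun k ↦ by simpa using hnonneg x hx k
  exact ⟨hnonneg c hc, hnonneg d hd, hanti c hc, hanti d hd,
    (tendsto_add_atTop_iff_nat 1).1 (by simp)⟩

theorem shift (h : IsScalePair η θ) (r : ℕ) :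
    IsScalePair (fun k ↦ η (k + r)) fun k ↦ θ (k + r) where
  fst_nonneg _ := h.fst_nonneg _
  snd_nonneg _ := h.snd_nonneg _
  fst_antitone _ _ hij := h.fst_antitone (Nat.add_le_add_right hij r)
  snd_antitone _ _ hij := h.snd_antitone (Nat.add_le_add_right hij r)
  tendsto_mul := h.tendsto_mul.comp (tendsto_add_atTop_nat r)

theorem tendsto_truncVarSum_shift (h : IsScalePair η θ) (hsum : truncVarSum f g a b η θ ≠ ⊤) :
    Tendsto (fun r ↦ truncVarSum f g a b (fun k ↦ η (k + r)) fun k ↦ θ (k + r)) atTop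
      (nhds 0) := by
  obtain ⟨hsum₁, hsum₂⟩ := ENNReal.add_ne_top.1 hsum
  have htails := (ENNReal.tendsto_sum_nat_add _ hsum₁).add (ENNReal.tendsto_sum_nat_add _ hsum₂)
  rw [add_zero] at htails
  refine tendsto_of_tendsto_of_tendsto_of_le_of_le tendsto_const_nhds htails (fun _ ↦ zero_le)
    fun r ↦ add_le_add (ENNReal.tsum_le_tsum fun k ↦ ?_) (ENNReal.tsum_le_tsum fun k ↦ ?_)
  · rw [add_right_comm k r 1]
    gcongr ENNReal.ofReal (?_ * _) * _
    exacts [h.fst_nonneg _, pow_le_pow_right₀ one_le_two (by omega)]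
  · gcongr ENNReal.ofReal (?_ * _) * _
    exacts [h.snd_nonneg _, pow_le_pow_right₀ one_le_two (by omega)]

theorem snd_pos (h : IsScalePair η θ) (hsum : truncVarSum f g a b η θ ≠ ⊤)
    (hf : truncVar f 0 a b = ⊤) (hg : truncVar g 0 a b = ⊤) (h₀ : 0 < θ 0) (k : ℕ) : 0 < θ k := by
  obtain ⟨hsum₁, hsum₂⟩ := ENNReal.add_ne_top.1 hsum
  induction k with
  | zero => exact h₀
  | succ k ih =>
    have hη : 0 < η k := (h.fst_nonneg k).lt_of_ne' fun hk ↦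
      ENNReal.ne_top_of_tsum_ne_top hsum₂ k <| by
        rw [hk, hf, ENNReal.mul_top (ENNReal.ofReal_pos.2 (by positivity)).ne']
    exact (h.snd_nonneg _).lt_of_ne' fun hk ↦ ENNReal.ne_top_of_tsum_ne_top hsum₁ k <| by
      rw [hk, hg, ENNReal.mul_top (ENNReal.ofReal_pos.2 (by positivity)).ne']

end IsScalePair

theorem exists_pos_ofReal_mul_le {A ε : ENNReal} (hA : A ≠ ⊤) (hε : ε ≠ 0) :
    ∃ c : ℝ, 0 < c ∧ ENNReal.ofReal c * A ≤ ε := by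
  obtain ⟨c, hc, hle⟩ := ENNReal.exists_nnreal_pos_mul_lt hA hε
  exact ⟨c, hc, by simpa using hle.le⟩

/-- If one of the functions has bounded variation, a single level of truncation suffices. -/
theorem exists_isScalePair_of_truncVar_zero_ne_top (hf : Regulated f a b)
    (hfg : truncVar f 0 a b ≠ ⊤ ∨ truncVar g 0 a b ≠ ⊤) {ε : ENNReal} (hε : ε ≠ 0) :
    ∃ η θ, IsScalePair η θ ∧ 0 < θ 0 ∧ truncVarSum f g a b η θ ≤ ε := by
  have hε' : ε / 2 ≠ 0 := ENNReal.half_pos hε |>.ne'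
  obtain ⟨c, hc, hcf, hcg⟩ : ∃ c : ℝ, 0 ≤ c ∧ truncVar f c a b ≠ ⊤ ∧
      ENNReal.ofReal (2 * c) * truncVar g 0 a b ≤ ε / 2 := by
    rcases hfg with hf₀ | hg₀
    · exact ⟨0, le_rfl, hf₀, by simp⟩
    · obtain ⟨c, hc, hcg⟩ := exists_pos_ofReal_mul_le hg₀ hε'
      exact ⟨c / 2, by positivity, (hf.truncVar_lt_top (by positivity)).ne,
        by rwa [mul_div_cancel₀ _ two_ne_zero]⟩
  obtain ⟨d, hd, hdf⟩ := exists_pos_ofReal_mul_le hcf hε'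
  refine ⟨Pi.single 0 c, Pi.single 0 d, .single hc hd.le, by simpa using hd, ?_⟩
  rw [truncVarSum_single, ← ENNReal.add_halves ε]
  exact add_le_add hcg hdf

theorem IsScalePair.exists_truncVarSum_le (h : IsScalePair η θ) (hf : Regulated f a b) {c e : ℝ}
    (he : ∀ u ∈ Icc a b, |f u - c| ≤ e)
    (hsum : ENNReal.ofReal e * truncVar g (θ 0) a b + truncVarSum f g a b η θ ≠ ⊤)
    {ε : ENNReal} (hε : ε ≠ 0) :
    ∃ η' θ', IsScalePair η' θ' ∧ 0 < θ' 0 ∧ truncVarSum f g a b η' θ' ≤ ε := by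
  by_cases hfg : truncVar f 0 a b ≠ ⊤ ∨ truncVar g 0 a b ≠ ⊤
  · exact exists_isScalePair_of_truncVar_zero_ne_top hf hfg hε
  push Not at hfg
  obtain ⟨hfirst, hrest⟩ := ENNReal.add_ne_top.1 hsum
  have he_pos : 0 < e := by
    by_contra! he₀
    have hle := truncVar_anti f a b (show 2 * e ≤ 0 by linarith)
    simp only [hfg.1, truncVar_eq_zero_of_forall_abs_sub_le he] at hle
    exact ENNReal.zero_ne_top (top_le_iff.1 hle)
  have hθ₀ : 0 < θ 0 := (h.snd_nonneg 0).lt_of_ne' fun h₀ ↦ hfirst <| by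
    rw [h₀, hfg.2, ENNReal.mul_top (ENNReal.ofReal_pos.2 he_pos).ne']
  obtain ⟨r, hr⟩ := ((h.tendsto_truncVarSum_shift hrest).eventually_le_const
    (pos_iff_ne_zero.2 hε)).exists
  exact ⟨_, _, h.shift r, h.snd_pos hrest hfg.1 hfg.2 hθ₀ _, hr⟩

theorem exists_rsIntegral_of_exists_isScalePair (hab : a < b) (hf : Regulated f a b)
    (hg : Regulated g a b) (hfg : NoCommonDiscont f g a b)
    (h : ∀ ε : ENNReal, ε ≠ 0 → ∃ η θ, IsScalePair η θ ∧ 0 < θ 0 ∧ truncVarSum f g a b η θ ≤ ε) :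
    ∃ I, RSIntegral f g a b I := by
  refine exists_rsIntegral_of_forall_abs_sub_le hab fun ε hε ↦ ?_
  obtain ⟨η, θ, hηθ, hθ₀, hsum⟩ := h (ENNReal.ofReal (ε / 2))
    (ENNReal.ofReal_pos.2 (half_pos hε)).ne'
  obtain ⟨δ, hδ, hsmall⟩ := exists_forall_abs_tagDiff_comp_le hf hg hfg hθ₀ (half_pos hε)
  refine ⟨δ, hδ, fun x hx y hy ↦ ?_⟩
  obtain ⟨s, m, σ, τ, hs, hsab, hσ, hτ, heq⟩ := exists_sub_eq_tagDiff hx hy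
  obtain ⟨G₀, hG₀⟩ := exists_isTruncApprox (g ∘ s) hθ₀.le m
  rw [← ENNReal.ofReal_le_ofReal_iff hε.le, heq, ← add_halves ε,
    ENNReal.ofReal_add (half_pos hε).le (half_pos hε).le]
  exact (hηθ.ofReal_abs_tagDiff_comp_le hs hsab hσ.monotone hτ.monotone hσ.le hτ.le hG₀).trans
    (add_le_add (ENNReal.ofReal_le_ofReal (hsmall hs hsab hσ hτ hG₀)) hsum)

theorem IsScalePair.ofReal_abs_sub_le_of_mem_riemannSums (h : IsScalePair η θ) {δ e x : ℝ}
    (he : ∀ u ∈ Icc a b, |f u - f a| ≤ e) (hx : x ∈ riemannSums f g a b δ) :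
    ENNReal.ofReal |x - f a * (g b - g a)| ≤
      ENNReal.ofReal e * truncVar g (θ 0) a b + truncVarSum f g a b η θ := by
  obtain ⟨s, m, σ, hs, hsab, hs₀, hσ, heq⟩ := exists_sub_mul_eq_tagDiff hx
  obtain ⟨G₀, hG₀⟩ := exists_isTruncApprox (g ∘ s) (h.snd_nonneg 0) m
  have hclose : ∀ j < m, |(f ∘ s) (σ j) - (f ∘ s) 0| ≤ e := fun j _ ↦ by
    simpa only [Function.comp_apply, hs₀] using he _ (hsab (σ j))
  have he₀ : 0 ≤ e := (abs_nonneg _).trans (he _ (hsab 0))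
  rw [heq]
  refine (h.ofReal_abs_tagDiff_comp_le hs hsab hσ.monotone monotone_const hσ.le
    (fun _ ↦ m.zero_le) hG₀).trans ?_
  gcongr
  exact (ofReal_abs_tagDiff_le_mul he₀ hclose hG₀).trans <| mul_le_mul_right
    (truncVariationOn_comp_le_truncVar g (h.snd_nonneg 0) hs hsab _) _

end Scales

theorem Regulated.abs_sub_le_sSup {f : ℝ → ℝ} {a b : ℝ} (hf : Regulated f a b) (c : ℝ) {u : ℝ}
    (hu : u ∈ Icc a b) : |f u - c| ≤ sSup {x | ∃ t ∈ Icc a b, x = |f t - c|} := by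
  obtain ⟨M, -, hM⟩ := hf.exists_bound
  refine le_csSup ⟨M + |c|, ?_⟩ ⟨u, hu, rfl⟩
  rintro _ ⟨t, ht, rfl⟩
  exact (abs_sub _ _).trans (add_le_add_left (hM t ht) _)

/-- Theorem 1 (main): existence of the Riemann–Stieltjes integral and the estimate `≤ S`. -/
theorem rs_integral_exists_of_truncVar_sum_lt_top
    (a b : ℝ) (hab : a < b) (f g : ℝ → ℝ)
    (hf : Regulated f a b) (hg : Regulated g a b)
    (hfg : NoCommonDiscont f g a b)
    (η θ : ℕ → ℝ) (hηnn : ∀ k, 0 ≤ η k) (hθnn : ∀ k, 0 ≤ θ k)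
    (hηa : Antitone η) (hθa : Antitone θ)
    (hηlim : Tendsto η atTop (nhds 0)) (hθlim : Tendsto θ atTop (nhds 0))
    (ηm1 : ℝ) (hηm1 : ηm1 = sSup {x | ∃ t ∈ Set.Icc a b, x = |f t - f a|})
    (S : ENNReal)
    (hS : S = (∑' k : ℕ,
          ENNReal.ofReal ((2 : ℝ) ^ k * (if k = 0 then ηm1 else η (k - 1))) *
            truncVar g (θ k) a b)
        + ∑' k : ℕ, ENNReal.ofReal ((2 : ℝ) ^ k * θ k) * truncVar f (η k) a b)
    (hSfin : S < ⊤) :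
    ∃ I : ℝ, RSIntegral f g a b I ∧
      ENNReal.ofReal |I - f a * (g b - g a)| ≤ S := by
  have he : ∀ u ∈ Icc a b, |f u - f a| ≤ ηm1 := fun u hu ↦ hηm1 ▸ hf.abs_sub_le_sSup (f a) hu
  have hηθ : IsScalePair η θ := ⟨hηnn, hθnn, hηa, hθa, by simpa using hηlim.mul hθlim⟩
  have hsplit : S = ENNReal.ofReal ηm1 * truncVar g (θ 0) a b + truncVarSum f g a b η θ := by
    rw [hS, tsum_eq_zero_add' ENNReal.summable, truncVarSum, ← add_assoc]
    simp
  obtain ⟨I, hI⟩ := exists_rsIntegral_of_exists_isScalePair hab hf hg hfg fun _ ↦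
    hηθ.exists_truncVarSum_le hf he (hsplit ▸ hSfin.ne)
  exact ⟨I, hI, hsplit ▸ hI.ofReal_abs_sub_le hab one_pos fun _ ↦
    hηθ.ofReal_abs_sub_le_of_mem_riemannSums he⟩
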